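/- For any prime power q and genus g ≥ 2, a_{[1²]}|_g := Σ_{C ∈ Hyp_g(F_q)} (1/|Aut_{F_q}(C)|) · a_1(C)² equals q^{2g} − 1, where a_1(C) = q + 1 − |C(F_q)|; in particular for q = 2, g = 5 this sum equals 1023. -/

import Mathlib

open Polynomial

noncomputable section

/-- ψ_n(A)(q) = (cx+d)^n q((ax+b)/(cx+d)) over an arbitrary field. -/
def psiF {F : Type*} [Field F] (n : ℕ) (A : Matrix (Fin 2) (Fin 2) F)
    (q : Polynomial F) : Polynomial F :=
  ∑ i ∈ Finset.range (n + 1),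
    C (q.coeff i) * (C (A 0 0) * X + C (A 0 1)) ^ i * (C (A 1 0) * X + C (A 1 1)) ^ (n - i)

/-- The affine chart y² + Qy = P is nonsingular over the algebraic closure of F. -/
def SmoothChartF {F : Type*} [Field F] (Q P : Polynomial F) : Prop :=
  ∀ x y : AlgebraicClosure F,
    ¬(y ^ 2 + aeval x Q * y - aeval x P = 0 ∧ 2 * y + aeval x Q = 0 ∧
      aeval x (derivative Q) * y - aeval x (derivative P) = 0)

/-- (Q, P) is a standard model of a hyperelliptic curve of genus g over F_q:
the degree window 2g+1 ≤ max{2 deg Q, deg P} ≤ 2g+2 holds, both charts of the standard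
projective model y² + Q(x)y = P(x) (the chart at infinity being obtained by
x ↦ 1/x, y ↦ y/x^{g+1}, i.e. reversing the coefficients of Q and P) are nonsingular over
the algebraic closure of F, and the defining equation stays irreducible over the algebraic
closure (the double cover does not split). -/
def IsHypModel {F : Type*} [Field F] (g : ℕ) (Q P : Polynomial F) : Prop :=
  2 * g + 1 ≤ max (2 * Q.natDegree) P.natDegree ∧
  max (2 * Q.natDegree) P.natDegree ≤ 2 * g + 2 ∧
  SmoothChartF Q P ∧
  SmoothChartF (reflect (g + 1) Q) (reflect (2 * g + 2) P) ∧
  ¬∃ u : Polynomial (AlgebraicClosure F),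
      u ^ 2 + Q.map (algebraMap F (AlgebraicClosure F)) * u =
        P.map (algebraMap F (AlgebraicClosure F))

/-- A standard hyperelliptic equation of genus g over F. -/
def HypEq (F : Type*) [Field F] (g : ℕ) :=
  {QP : Polynomial F × Polynomial F // IsHypModel g QP.1 QP.2}

/-- The datum (A, e, r) transforms the curve y² + Q₁y = P₁ into y² + Q₂y = P₂ via the
change of variables (x, y) ↦ ((ax+b)/(cx+d), (r(x) + e·y)/(cx+d)^{g+1}). -/
def IsoTriple {F : Type*} [Field F] (g : ℕ) (A : Matrix (Fin 2) (Fin 2) F) (e : F)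
    (r : Polynomial F) (Q₁ P₁ Q₂ P₂ : Polynomial F) : Prop :=
  e ≠ 0 ∧ r.natDegree ≤ g + 1 ∧
  C e * Q₁ = 2 * r + psiF (g + 1) A Q₂ ∧
  C (e ^ 2) * P₁ = psiF (2 * g + 2) A P₂ - r ^ 2 - psiF (g + 1) A Q₂ * r

/-- Two standard hyperelliptic equations define F-isomorphic curves. -/
def IsomRel {F : Type*} [Field F] (g : ℕ) (C₁ C₂ : HypEq F g) : Prop :=
  ∃ (A : Matrix.GeneralLinearGroup (Fin 2) F) (e : F) (r : Polynomial F),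
    IsoTriple g (A : Matrix (Fin 2) (Fin 2) F) e r C₁.1.1 C₁.1.2 C₂.1.1 C₂.1.2

/-- Hyp_g(F): the set of F-isomorphism classes of hyperelliptic curves of genus g
over F. -/
def HypClass (F : Type*) [Field F] (g : ℕ) := Quot (IsomRel (F := F) g)

/-- The triples (A, e, r) inducing an automorphism of the curve (Q, P); they map
(q−1)-to-1 onto Aut_F(C), since (A,e,r) and (λA, λ^{g+1}e, λ^{g+1}r) induce the same
automorphism, so that |Aut_F(C)| = |AutTriples| / (q−1). -/
def AutTriples {F : Type*} [Field F] (g : ℕ) (C : HypEq F g) :=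
  {Aer : Matrix.GeneralLinearGroup (Fin 2) F × F × Polynomial F //
    IsoTriple g (Aer.1 : Matrix (Fin 2) (Fin 2) F) Aer.2.1 Aer.2.2
      C.1.1 C.1.2 C.1.1 C.1.2}

/-- The number of L-points of the smooth projective model of y² + Qy = P: affine points
plus the points at infinity (solutions of y² + b_{g+1}y = a_{2g+2} in the chart at
infinity at x = 0). -/
def nPoints {F : Type*} [Field F] (g : ℕ) (L : Type*) [Field L] [Algebra F L]
    (Q P : Polynomial F) : ℕ :=
  Nat.card {xy : L × L // xy.2 ^ 2 + aeval xy.1 Q * xy.2 = aeval xy.1 P} +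
  Nat.card {y : L //
    y ^ 2 + algebraMap F L (Q.coeff (g + 1)) * y = algebraMap F L (P.coeff (2 * g + 2))}

/-!
The double cover `C → P¹` gives `a₁(C) = -∑_{p ∈ P¹(F)} χ_p`, where `χ_p` is the number of points
over `p` minus one. By orbit–stabilizer the weighted sum over isomorphism classes is an average
over all smooth equations `y² + Q y = P` of weight `n = g + 1` (so `deg Q ≤ n`, `deg P ≤ 2n`), and
by `GL₂`-symmetry the sum of `a₁²` over these is `(q + 1) (S₁(n) + q S₂(n))` with `S₁ = ∑ χ_∞²` and
`S₂ = ∑ χ_∞ χ_0`.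

Smoothness is removed by a sieve that works in every characteristic. An equation whose
discriminant does not vanish at infinity arises from exactly one smooth equation, of some weight
`m ≤ n`, by a substitution `y ↦ h y + r` with `h` monic of degree `n - m` and `deg r < n - m`; where
the discriminant vanishes, `χ_∞ = 0`. Over all pairs `(Q, P)` of bounded degree the coefficients
are independent and the two sums are immediate, so the sieve yields recursions in `n` that
determine `S₁` and `S₂`.
-/


section HomEval

open Matrix

variable {R L : Type*} [CommRing R] [CommRing L] [Algebra R L]

/-- Evaluation at `v = (v₀, v₁)` of the binary form of degree `n` attached to a polynomial:
`p ↦ ∑ pᵢ v₀ⁱ v₁ⁿ⁻ⁱ`. Coefficients of `p` in degrees above `n` are ignored. -/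
def homEval (n : ℕ) (v : Fin 2 → L) : R[X] →ₗ[R] L :=
  (MvPolynomial.aeval v).toLinearMap ∘ₗ homogenizeLM n

theorem homEval_apply (n : ℕ) (v : Fin 2 → L) (p : R[X]) :
    homEval n v p = MvPolynomial.aeval v (p.homogenize n) := rfl

theorem homEval_eq_sum (n : ℕ) (v : Fin 2 → L) (p : R[X]) :
    homEval n v p =
      ∑ i ∈ Finset.range (n + 1), algebraMap R L (p.coeff i) * v 0 ^ i * v 1 ^ (n - i) := by
  rw [homEval_apply, homogenize, map_sum, Finset.Nat.sum_antidiagonal_eq_sum_range_succ_mk]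
  refine Finset.sum_congr rfl fun i _ => ?_
  rw [MvPolynomial.aeval_monomial, Finsupp.prod_fintype _ _ (by simp)]
  simp [Fin.prod_univ_two, mul_assoc]

theorem homEval_mul {m n : ℕ} {p q : R[X]} (hp : p.natDegree ≤ m) (hq : q.natDegree ≤ n)
    (v : Fin 2 → L) : homEval (m + n) v (p * q) = homEval m v p * homEval n v q := by
  simp [homEval_apply, homogenize_mul p q hp hq]

theorem homEval_sq {n : ℕ} {p : R[X]} (hp : p.natDegree ≤ n) (v : Fin 2 → L) :
    homEval (2 * n) v (p ^ 2) = homEval n v p ^ 2 := by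
  rw [sq, sq, two_mul, homEval_mul hp hp]

theorem homEval_add_left {m : ℕ} {p : R[X]} (hp : p.natDegree ≤ m) (k : ℕ) (v : Fin 2 → L) :
    homEval (m + k) v p = homEval m v p * v 1 ^ k := by
  simpa [homEval_apply] using homEval_mul hp (q := 1) (n := k) (by simp) v

theorem homEval_C (n : ℕ) (v : Fin 2 → L) (c : R) :
    homEval n v (C c) = algebraMap R L c * v 1 ^ n := by
  simp [homEval_apply]

theorem homEval_C_mul (n : ℕ) (v : Fin 2 → L) (c : R) (p : R[X]) :
    homEval n v (C c * p) = algebraMap R L c * homEval n v p := by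
  rw [C_mul', map_smul, Algebra.smul_def]

theorem homEval_two_mul (n : ℕ) (v : Fin 2 → L) (p : R[X]) :
    homEval n v (2 * p) = 2 * homEval n v p := by
  rw [two_mul, map_add, two_mul]

theorem homEval_smul (n : ℕ) (l : L) (v : Fin 2 → L) (p : R[X]) :
    homEval n (l • v) p = l ^ n * homEval n v p := by
  rw [homEval_eq_sum, homEval_eq_sum, Finset.mul_sum]
  refine Finset.sum_congr rfl fun i hi => ?_
  rw [← Nat.add_sub_of_le (Finset.mem_range_succ_iff.1 hi), pow_add, Nat.add_sub_cancel_left]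
  simp only [Pi.smul_apply, smul_eq_mul, mul_pow]
  ring

theorem map_homEval {L' : Type*} [CommRing L'] [Algebra R L'] (f : L →ₐ[R] L') (n : ℕ)
    (v : Fin 2 → L) (p : R[X]) : f (homEval n v p) = homEval n (f ∘ v) p := by
  simp [homEval_eq_sum]

theorem homEval_of_eq_one {n : ℕ} {p : R[X]} (hp : p.natDegree ≤ n) {v : Fin 2 → L}
    (hv : v 1 = 1) : homEval n v p = aeval (v 0) p :=
  aeval_homogenize_of_eq_one hp v hv

theorem homEval_one_zero (n : ℕ) (p : R[X]) :
    homEval n ![(1 : L), 0] p = algebraMap R L (p.coeff n) := by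
  rw [homEval_eq_sum, Finset.sum_range_succ, Finset.sum_eq_zero]
  · simp
  · intro i hi
    simp [Nat.sub_ne_zero_of_lt (Finset.mem_range.1 hi)]

theorem homEval_zero_one (n : ℕ) (p : R[X]) :
    homEval n ![(0 : L), 1] p = algebraMap R L (p.coeff 0) := by
  rw [homEval_eq_sum, Finset.sum_range_succ', Finset.sum_eq_zero] <;> simp

theorem homEval_reflect (n : ℕ) (p : R[X]) (v : Fin 2 → L) :
    homEval n v (reflect n p) = homEval n (v ∘ Fin.rev) p := by
  rw [homEval_eq_sum, homEval_eq_sum, ← Finset.sum_range_reflect]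
  refine Finset.sum_congr rfl fun i hi => ?_
  have hi' : i ≤ n := Finset.mem_range_succ_iff.1 hi
  rw [Nat.add_sub_cancel, coeff_reflect, revAt_le (Nat.sub_le n i), Nat.sub_sub_self hi',
    mul_right_comm]
  rfl

theorem homEval_map {S : Type*} [CommRing S] [Algebra R S] [Algebra S L] [IsScalarTower R S L]
    (n : ℕ) (v : Fin 2 → L) (p : R[X]) :
    homEval n v (p.map (algebraMap R S)) = homEval n v p := by
  simp [homEval_eq_sum, ← IsScalarTower.algebraMap_apply]

end HomEval

section Psi

open Matrix

variable {F L : Type*} [Field F] [CommRing L] [Algebra F L]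

theorem psiF_eq_homEval (n : ℕ) (A : Matrix (Fin 2) (Fin 2) F) (q : F[X]) :
    psiF n A q = homEval n (A.map C *ᵥ ![X, 1]) q := by
  simp [psiF, homEval_eq_sum]

theorem homogenize_psiF (n : ℕ) (A : Matrix (Fin 2) (Fin 2) F) (q : F[X]) :
    (psiF n A q).homogenize n =
      MvPolynomial.aeval (A.map MvPolynomial.C *ᵥ MvPolynomial.X) (q.homogenize n) := by
  refine homogenize_eq_of_isHomogeneous ?_ ?_
  · have hlin (i : Fin 2) :
        ((A.map MvPolynomial.C *ᵥ MvPolynomial.X) i : MvPolynomial (Fin 2) F).IsHomogeneous 1 :=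
      MvPolynomial.IsHomogeneous.sum _ _ _ fun j _ => by
        simpa using (MvPolynomial.isHomogeneous_C _ (A i j)).mul (MvPolynomial.isHomogeneous_X F j)
    simpa using (isHomogeneous_homogenize q).aeval _ hlin
  · rw [psiF_eq_homEval, homEval_apply, ← AlgHom.comp_apply, MvPolynomial.comp_aeval]
    congr 2
    ext1 i
    simp [mulVec, dotProduct, Fin.sum_univ_two, C_eq_algebraMap]

theorem homEval_psiF (n : ℕ) (A : Matrix (Fin 2) (Fin 2) F) (q : F[X]) (v : Fin 2 → L) :
    homEval n v (psiF n A q) = homEval n (A.map (algebraMap F L) *ᵥ v) q := by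
  rw [homEval_apply, homogenize_psiF, homEval_apply, ← AlgHom.comp_apply, MvPolynomial.comp_aeval]
  congr 2
  ext1 i
  simp [mulVec, dotProduct, Fin.sum_univ_two]

theorem psiF_psiF (n : ℕ) (A B : Matrix (Fin 2) (Fin 2) F) (q : F[X]) :
    psiF n A (psiF n B q) = psiF n (B * A) q := by
  rw [psiF_eq_homEval, homEval_psiF, psiF_eq_homEval, mulVec_mulVec, Matrix.map_mul]
  rfl

theorem psiF_one {n : ℕ} {q : F[X]} (hq : q.natDegree ≤ n) : psiF n 1 q = q := by
  rw [psiF_eq_homEval]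
  simp [homEval_of_eq_one hq]

theorem natDegree_psiF_le (n : ℕ) (A : Matrix (Fin 2) (Fin 2) F) (q : F[X]) :
    (psiF n A q).natDegree ≤ n := by
  have hlin (a b : F) (k : ℕ) : ((C a * X + C b) ^ k).natDegree ≤ k := by
    simpa using natDegree_pow_le_of_le k (natDegree_linear_le (a := a) (b := b))
  refine natDegree_sum_le_of_forall_le _ _ fun i hi => ?_
  calc _ ≤ 0 + i + (n - i) :=
        natDegree_mul_le_of_le (natDegree_mul_le_of_le (by simp) (hlin _ _ _)) (hlin _ _ _)
    _ = n := by have := Finset.mem_range_succ_iff.1 hi; omega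

end Psi

section QuadSubst

variable {R L : Type*} [CommRing R] [CommRing L] [Algebra R L]

/-- The substitution `y ↦ h y + r` turns `y² + Q y - P` into `h² (y² + Q' y - P')`. -/
structure QuadSubst (h r Q' P' Q P : R) : Prop where
  linear : h * Q' = 2 * r + Q
  const : h ^ 2 * P' = P - r ^ 2 - Q * r

namespace QuadSubst

variable {h h₁ h₂ r r₁ r₂ Q Q' Q₁ Q₂ Q₃ P P' P₁ P₂ P₃ : R}

theorem eval (s : QuadSubst h r Q' P' Q P) (y : R) :
    (h * y + r) ^ 2 + Q * (h * y + r) - P = h ^ 2 * (y ^ 2 + Q' * y - P') := by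
  linear_combination -h * y * s.linear + s.const

theorem disc (s : QuadSubst h r Q' P' Q P) : h ^ 2 * (Q' ^ 2 + 4 * P') = Q ^ 2 + 4 * P := by
  linear_combination (h * Q' + 2 * r + Q) * s.linear + 4 * s.const

theorem refl (Q P : R) : QuadSubst 1 0 Q P Q P := ⟨by ring, by ring⟩

theorem trans (s₁ : QuadSubst h₁ r₁ Q₁ P₁ Q₂ P₂) (s₂ : QuadSubst h₂ r₂ Q₂ P₂ Q₃ P₃) :
    QuadSubst (h₂ * h₁) (r₂ + h₂ * r₁) Q₁ P₁ Q₃ P₃ where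
  linear := by linear_combination h₂ * s₁.linear + s₂.linear
  const := by linear_combination h₂ ^ 2 * s₁.const + s₂.const - h₂ * r₁ * s₂.linear

theorem symm (s : QuadSubst h r Q' P' Q P) (h_inv : h₁ * h = 1) :
    QuadSubst h₁ (-(h₁ * r)) Q P Q' P' where
  linear := by linear_combination Q' * h_inv - h₁ * s.linear
  const := by
    linear_combination (h₁ * h + 1) * P' * h_inv - h₁ ^ 2 * s.const - h₁ ^ 2 * r * s.linear
      + h₁ * r * Q' * h_inv

theorem eq_of_isRegular (hh : IsRegular h) (s₁ : QuadSubst h r Q₁ P₁ Q P)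
    (s₂ : QuadSubst h r Q₂ P₂ Q P) : Q₁ = Q₂ ∧ P₁ = P₂ :=
  ⟨hh.left (s₁.linear.trans s₂.linear.symm), (hh.pow 2).left (s₁.const.trans s₂.const.symm)⟩

protected theorem homEval {h r Q' P' Q P : R[X]} {d m : ℕ} (s : QuadSubst h r Q' P' Q P)
    (hh : h.natDegree ≤ d) (hr : r.natDegree ≤ d + m) (hQ' : Q'.natDegree ≤ m)
    (hP' : P'.natDegree ≤ 2 * m) (hQ : Q.natDegree ≤ d + m) (v : Fin 2 → L) :
    QuadSubst (homEval d v h) (homEval (d + m) v r) (homEval m v Q') (homEval (2 * m) v P')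
      (homEval (d + m) v Q) (homEval (2 * (d + m)) v P) where
  linear := by rw [← homEval_mul hh hQ', s.linear, map_add, homEval_two_mul]
  const := by
    have hh2 : (h ^ 2).natDegree ≤ 2 * d := natDegree_pow_le_of_le 2 hh
    calc homEval d v h ^ 2 * homEval (2 * m) v P'
        = homEval (2 * (d + m)) v (h ^ 2 * P') := by
          rw [mul_add, homEval_mul hh2 hP', homEval_sq hh]
      _ = _ := by
          rw [s.const, map_sub, map_sub, homEval_sq hr, two_mul, homEval_mul hQ hr]

end QuadSubst

end QuadSubst

section Smoothness

open Matrix DualNumber TrivSqZeroExt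

section DualNumber

variable {F K : Type*} [Field F] [Field K] [Algebra F K]

theorem dualNumber_mul_eq_zero {x y : K[ε]} (hx : x.fst = 0) (hy : y.fst = 0) : x * y = 0 := by
  ext <;> simp [hx, hy]

theorem fst_homEval (n : ℕ) (w : Fin 2 → K[ε]) (p : F[X]) :
    (homEval n w p).fst = homEval n (fun i => (w i).fst) p :=
  map_homEval (fstHom F K K) n w p

theorem aeval_dualNumber (s : K[ε]) (p : F[X]) :
    aeval s p = inl (aeval s.fst p) + inr (aeval s.fst (derivative p) * s.snd) := by
  have h_inl (q : F[X]) : aeval (inl s.fst : K[ε]) q = inl (aeval s.fst q) :=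
    aeval_algHom_apply (inlAlgHom F K K) s.fst q
  rw [← inl_fst_add_inr_snd_eq s, aeval_add_of_sq_eq_zero _ _ _ (by rw [sq, inr_mul_inr]), h_inl,
    h_inl, inl_mul_inr]
  simp

end DualNumber

variable {F : Type*} [Field F]

section Curve

variable {L K : Type*} [CommRing L] [Algebra F L] [Field K] [Algebra F K]

/-- The pair `(w, z)` lies on the curve `z² + Q(w) z = P(w)` of weight `n`: `w` stands for
homogeneous coordinates on the projective line and `z` has weight `n`, so that `Q` and `P` are
read as binary forms of degrees `n` and `2n`. -/
def OnCurve (n : ℕ) (Q P : F[X]) (w : Fin 2 → L) (z : L) : Prop :=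
  z ^ 2 + homEval n w Q * z = homEval (2 * n) w P

theorem onCurve_smul_iff {n : ℕ} {Q P : F[X]} {l : L} (hl : IsUnit l) (w : Fin 2 → L) (z : L) :
    OnCurve n Q P (l • w) (l ^ n * z) ↔ OnCurve n Q P w z := by
  rw [OnCurve, OnCurve, homEval_smul, homEval_smul,
    ← ((hl.pow n).pow 2).mul_right_inj (b := z ^ 2 + _)]
  ring_nf

/-- The point `(v, y)` is not a singular point of the curve of weight `n`: some first-order
deformation of it leaves the curve. Points off the curve qualify. -/
def IsNonsingularAt (n : ℕ) (Q P : F[X]) (v : Fin 2 → K) (y : K) : Prop :=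
  ∃ (w : Fin 2 → K[ε]) (z : K[ε]), (fun i => (w i).fst) = v ∧ z.fst = y ∧ ¬OnCurve n Q P w z

theorem IsNonsingularAt.smul {n : ℕ} {Q P : F[X]} {v : Fin 2 → K} {y l : K} (hl : l ≠ 0)
    (h : IsNonsingularAt n Q P v y) : IsNonsingularAt n Q P (l • v) (l ^ n * y) := by
  obtain ⟨w, z, rfl, rfl, h_off⟩ := h
  have h_unit : IsUnit (inl l : K[ε]) := by simpa [isUnit_iff_isUnit_fst] using hl
  refine ⟨inl l • w, inl l ^ n * z, ?_, by simp, by rwa [onCurve_smul_iff h_unit]⟩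
  ext i
  simp

theorem isNonsingularAt_reflect_iff {n : ℕ} {Q P : F[X]} {v : Fin 2 → K} {y : K} :
    IsNonsingularAt n (reflect n Q) (reflect (2 * n) P) v y ↔
      IsNonsingularAt n Q P (v ∘ Fin.rev) y := by
  have h_reflect (w : Fin 2 → K[ε]) (z : K[ε]) :
      OnCurve n (reflect n Q) (reflect (2 * n) P) w z ↔ OnCurve n Q P (w ∘ Fin.rev) z := by
    rw [OnCurve, OnCurve, homEval_reflect, homEval_reflect]
  constructor
  · rintro ⟨w, z, rfl, rfl, h_off⟩
    exact ⟨w ∘ Fin.rev, z, rfl, rfl, by rwa [← h_reflect]⟩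
  · rintro ⟨w, z, hw, rfl, h_off⟩
    refine ⟨w ∘ Fin.rev, z, ?_, rfl, ?_⟩
    · ext i
      simpa using congrFun hw i.rev
    · rwa [h_reflect, Function.comp_assoc, Fin.rev_involutive.comp_self]

theorem isNonsingularAt_of_disc_ne_zero {n : ℕ} {Q P : F[X]} {v : Fin 2 → K}
    (h : homEval n v Q ^ 2 + 4 * homEval (2 * n) v P ≠ 0) (y : K) : IsNonsingularAt n Q P v y := by
  by_contra h_sing
  have h_fst (n : ℕ) (p : F[X]) : homEval n (fun i => (inl (v i) : K[ε])) p = inl (homEval n v p) :=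
    (map_homEval (inlAlgHom F K K) n v p).symm
  have h_on (z : K[ε]) (hz : z.fst = y) :
      z ^ 2 + inl (homEval n v Q) * z = inl (homEval (2 * n) v P) := by
    rw [← h_fst, ← h_fst]
    by_contra h_off
    exact h_sing ⟨fun i => inl (v i), z, by simp, hz, h_off⟩
  have h_curve : y ^ 2 + homEval n v Q * y = homEval (2 * n) v P := by
    simpa using congrArg TrivSqZeroExt.fst (h_on (inl y) (by simp))
  have h_double : 2 * y + homEval n v Q = 0 := by
    have h_snd := congrArg TrivSqZeroExt.snd (h_on (inl y + ε) (by simp))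
    simp only [sq, snd_add, TrivSqZeroExt.snd_mul, fst_add, fst_inl, fst_eps, add_zero, snd_inl,
      snd_eps, zero_add, smul_eq_mul, mul_one, MulOpposite.smul_eq_mul_unop, MulOpposite.unop_op,
      one_mul, smul_zero] at h_snd
    linear_combination h_snd
  exact h (by linear_combination (2 * y + homEval n v Q) * h_double - 4 * h_curve)

end Curve

section Charts

variable {n : ℕ} {Q P : F[X]}

theorem sq_add_mul_eq_dualNumber_iff {K : Type*} [Field K] [Algebra F K] (Q P : F[X])
    (s t : K[ε]) :
    t ^ 2 + aeval s Q * t = aeval s P ↔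
      t.fst ^ 2 + aeval s.fst Q * t.fst - aeval s.fst P = 0 ∧
        (2 * t.fst + aeval s.fst Q) * t.snd +
          (aeval s.fst (derivative Q) * t.fst - aeval s.fst (derivative P)) * s.snd = 0 := by
  rw [← sub_eq_zero, TrivSqZeroExt.ext_iff, aeval_dualNumber s Q, aeval_dualNumber s P]
  refine and_congr (by simp) ?_
  simp only [sq, inr_eq_smul_eps, snd_sub, snd_add, TrivSqZeroExt.snd_mul, smul_eq_mul,
    MulOpposite.smul_eq_mul_unop, MulOpposite.unop_op, fst_add, fst_inl, fst_smul, fst_eps,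
    mul_zero, add_zero, snd_inl, snd_smul, snd_eps, mul_one, zero_add, snd_zero]
  ring_nf

theorem smoothChartF_iff_dualNumber :
    SmoothChartF Q P ↔ ∀ x y : AlgebraicClosure F, ∃ s t : (AlgebraicClosure F)[ε],
      s.fst = x ∧ t.fst = y ∧ t ^ 2 + aeval s Q * t ≠ aeval s P := by
  refine forall₂_congr fun x y => ⟨fun h_smooth => ?_, ?_⟩
  · by_contra! h_sing
    have h_tangent (s t : (AlgebraicClosure F)[ε]) (hs : s.fst = x) (ht : t.fst = y) :=
      hs ▸ ht ▸ (sq_add_mul_eq_dualNumber_iff Q P s t).1 (h_sing s t hs ht)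
    have h_dy := h_tangent (inl x) (inl y + ε) (by simp) (by simp)
    have h_dx := h_tangent (inl x + ε) (inl y) (by simp) (by simp)
    exact h_smooth ⟨by simpa using h_dy.1, by simpa using h_dy.2, by simpa using h_dx.2⟩
  · rintro ⟨s, t, rfl, rfl, h_off⟩ ⟨h_curve, h_dy, h_dx⟩
    exact h_off ((sq_add_mul_eq_dualNumber_iff Q P s t).2 ⟨h_curve, by rw [h_dy, h_dx]; ring⟩)

theorem onCurve_of_eq_one_iff {L : Type*} [CommRing L] [Algebra F L] (hQ : Q.natDegree ≤ n)
    (hP : P.natDegree ≤ 2 * n) (s t : L) :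
    OnCurve n Q P ![s, 1] t ↔ t ^ 2 + aeval s Q * t = aeval s P := by
  rw [OnCurve, homEval_of_eq_one hQ rfl, homEval_of_eq_one hP rfl]
  rfl

theorem smoothChartF_iff_isNonsingularAt (hQ : Q.natDegree ≤ n) (hP : P.natDegree ≤ 2 * n) :
    SmoothChartF Q P ↔ ∀ x y : AlgebraicClosure F, IsNonsingularAt n Q P ![x, 1] y := by
  rw [smoothChartF_iff_dualNumber]
  refine forall₂_congr fun x y => ⟨?_, ?_⟩
  · rintro ⟨s, t, rfl, rfl, h_off⟩
    refine ⟨![s, 1], t, ?_, rfl, by rwa [onCurve_of_eq_one_iff hQ hP]⟩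
    ext i
    fin_cases i <;> simp
  · rintro ⟨w, z, hw, rfl, h_off⟩
    have hw0 : (w 0).fst = x := congrFun hw 0
    have hw1 : (w 1).fst = 1 := congrFun hw 1
    obtain ⟨u, hu⟩ : IsUnit (w 1) := by simp [isUnit_iff_isUnit_fst, hw1]
    have hu_inv : (↑u⁻¹ : (AlgebraicClosure F)[ε]).fst = 1 := by
      simpa [hu, hw1] using congrArg TrivSqZeroExt.fst u.inv_mul
    refine ⟨↑u⁻¹ * w 0, (↑u⁻¹ : (AlgebraicClosure F)[ε]) ^ n * z, by simp [hu_inv, hw0],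
      by simp [hu_inv], ?_⟩
    rw [Ne, ← onCurve_of_eq_one_iff hQ hP]
    convert h_off using 1
    rw [← onCurve_smul_iff u.isUnit, ← mul_assoc, ← mul_pow, u.mul_inv, one_pow, one_mul]
    congr!
    ext1 i
    fin_cases i <;> simp [← hu]

/-- The projective curve of weight `n` has no singular point over the algebraic closure. -/
def IsSmooth (n : ℕ) (Q P : F[X]) : Prop :=
  ∀ v : Fin 2 → AlgebraicClosure F, v ≠ 0 → ∀ y, IsNonsingularAt n Q P v y

theorem isSmooth_of_charts
    (h_affine : ∀ x y : AlgebraicClosure F, IsNonsingularAt n Q P ![x, 1] y)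
    (h_infty : ∀ y : AlgebraicClosure F, IsNonsingularAt n Q P ![1, 0] y) : IsSmooth n Q P := by
  intro v hv y
  suffices ∃ l : AlgebraicClosure F, l ≠ 0 ∧ ∀ y, IsNonsingularAt n Q P (l⁻¹ • v) y by
    obtain ⟨l, hl, h_scaled⟩ := this
    simpa [hl, ← mul_assoc, ← mul_pow] using (h_scaled (l⁻¹ ^ n * y)).smul hl
  by_cases h1 : v 1 = 0
  · have h0 : v 0 ≠ 0 := fun h0 => hv (by ext i; fin_cases i <;> simp [h0, h1])
    refine ⟨v 0, h0, fun y => ?_⟩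
    convert h_infty y using 1
    ext i
    fin_cases i <;> simp [h0, h1]
  · refine ⟨v 1, h1, fun y => ?_⟩
    convert h_affine ((v 1)⁻¹ * v 0) y using 1
    ext i
    fin_cases i <;> simp [h1]

theorem isSmooth_iff (hQ : Q.natDegree ≤ n) (hP : P.natDegree ≤ 2 * n) :
    IsSmooth n Q P ↔ SmoothChartF Q P ∧ SmoothChartF (reflect n Q) (reflect (2 * n) P) := by
  have h_rev (x : AlgebraicClosure F) : ![x, 1] ∘ Fin.rev = ![1, x] := by
    ext i
    fin_cases i <;> rfl
  rw [smoothChartF_iff_isNonsingularAt hQ hP, smoothChartF_iff_isNonsingularAt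
    (natDegree_reflect_le.trans (max_le le_rfl hQ)) (natDegree_reflect_le.trans (max_le le_rfl hP))]
  simp only [isNonsingularAt_reflect_iff, h_rev]
  exact ⟨fun h => ⟨fun x => h _ (by simp), fun x => h _ (by simp)⟩,
    fun h => isSmooth_of_charts h.1 (h.2 0)⟩

theorem isSmooth_of_smoothChartF (hQ : Q.natDegree ≤ n) (hP : P.natDegree ≤ 2 * n)
    (h_chart : SmoothChartF Q P) (h_disc : Q.coeff n ^ 2 + 4 * P.coeff (2 * n) ≠ 0) :
    IsSmooth n Q P := by
  refine isSmooth_of_charts ((smoothChartF_iff_isNonsingularAt hQ hP).1 h_chart)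
    (isNonsingularAt_of_disc_ne_zero ?_)
  rw [homEval_one_zero, homEval_one_zero]
  contrapose! h_disc
  apply (algebraMap F (AlgebraicClosure F)).injective
  rwa [map_add, map_mul, map_pow, map_zero, map_ofNat]

end Charts

section IsHypModel

variable {g : ℕ} {Q P : F[X]}

theorem IsSmooth.le_max_natDegree (h : IsSmooth (g + 1) Q P) :
    2 * g + 1 ≤ max (2 * Q.natDegree) P.natDegree := by
  by_contra! h_lt
  have hQ : Q.natDegree ≤ g := by have := (le_max_left _ _).trans_lt h_lt; omega
  have hP : P.natDegree ≤ 2 * g := by have := (le_max_right _ _).trans_lt h_lt; omega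
  obtain ⟨w, z, hw, hz, h_off⟩ := h ![1, 0] (by simp) 0
  have hw1 : (w 1).fst = 0 := congrFun hw 1
  refine h_off ?_
  rw [OnCurve, mul_add, mul_one, homEval_add_left hQ, homEval_add_left hP, pow_one, sq, sq,
    dualNumber_mul_eq_zero hz hz, dualNumber_mul_eq_zero hw1 hw1, mul_assoc,
    dualNumber_mul_eq_zero hw1 hz]
  ring

theorem exists_homEval_eq_zero {K : Type*} [Field K] [IsAlgClosed K] {n : ℕ} (hn : n ≠ 0)
    {p : K[X]} (hp : p.natDegree ≤ n) : ∃ v : Fin 2 → K, v ≠ 0 ∧ homEval n v p = 0 := by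
  by_cases hc : p.coeff n = 0
  · exact ⟨![1, 0], by simp, by simp [homEval_one_zero, hc]⟩
  · have h_deg : p.degree ≠ 0 := fun h0 => by
      have h_const : p.natDegree = 0 := natDegree_eq_of_degree_eq_some h0
      have := le_natDegree_of_ne_zero hc
      omega
    obtain ⟨x, hx⟩ := IsAlgClosed.exists_root p h_deg
    exact ⟨![x, 1], by simp, by rw [homEval_of_eq_one hp rfl]; simpa using hx⟩

theorem natDegree_le_of_sq_add_mul_eq {K : Type*} [Field K] {n : ℕ} {u q p : K[X]}
    (hq : q.natDegree ≤ n) (hp : p.natDegree ≤ 2 * n) (hu : u ^ 2 + q * u = p) :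
    u.natDegree ≤ n := by
  by_contra! h_lt
  have h_deg : (u + q).natDegree = u.natDegree :=
    natDegree_add_eq_left_of_natDegree_lt (hq.trans_lt h_lt)
  have h_prod : p.natDegree = u.natDegree + u.natDegree := by
    rw [← hu, show u ^ 2 + q * u = u * (u + q) by ring, natDegree_mul _ _, h_deg]
    · exact ne_zero_of_natDegree_gt h_lt
    · exact ne_zero_of_natDegree_gt (h_deg ▸ h_lt)
  omega

/-- If `y² + Q y - P = (y - u) (y + u + Q)`, then the two components meet over the zeros of
`2u + Q`, and the curve is singular there. -/
theorem IsSmooth.not_split {n : ℕ} (hn : n ≠ 0) (hQ : Q.natDegree ≤ n) (hP : P.natDegree ≤ 2 * n)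
    (h : IsSmooth n Q P) :
    ¬∃ u : (AlgebraicClosure F)[X], u ^ 2 + Q.map (algebraMap F (AlgebraicClosure F)) * u =
      P.map (algebraMap F (AlgebraicClosure F)) := by
  rintro ⟨u, hu⟩
  have hQK := (natDegree_map_le (f := algebraMap F (AlgebraicClosure F)) (p := Q)).trans hQ
  have hPK := (natDegree_map_le (f := algebraMap F (AlgebraicClosure F)) (p := P)).trans hP
  have hud : u.natDegree ≤ n := natDegree_le_of_sq_add_mul_eq hQK hPK hu
  set q := Q.map (algebraMap F (AlgebraicClosure F))
  obtain ⟨v, hv, h_zero⟩ := exists_homEval_eq_zero hn (p := 2 * u + q)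
    (natDegree_add_le_of_le (natDegree_mul_le_of_le (natDegree_ofNat 2).le hud) hQK |>.trans
      (by simp))
  obtain ⟨w, z, rfl, hz, h_off⟩ := h v hv (homEval n v u)
  have h_factor : z ^ 2 + homEval n w q * z - homEval (2 * n) w (u ^ 2 + q * u) =
      (z - homEval n w u) * (z + homEval n w u + homEval n w q) := by
    rw [map_add, homEval_sq hud, two_mul, homEval_mul hQK hud]
    ring
  refine h_off (sub_eq_zero.1 ?_)
  rw [← homEval_map (S := AlgebraicClosure F) n w Q,
    ← homEval_map (S := AlgebraicClosure F) (2 * n) w P, ← hu, h_factor]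
  refine dualNumber_mul_eq_zero (by simp [hz, fst_homEval]) ?_
  rw [map_add, homEval_two_mul] at h_zero
  simp only [fst_add, fst_homEval, hz]
  linear_combination h_zero

theorem isHypModel_iff : IsHypModel g Q P ↔
    Q.natDegree ≤ g + 1 ∧ P.natDegree ≤ 2 * (g + 1) ∧ IsSmooth (g + 1) Q P := by
  constructor
  · rintro ⟨-, h_max, h_zero, h_infty, -⟩
    have hQ : Q.natDegree ≤ g + 1 := by have := (le_max_left _ _).trans h_max; omega
    have hP : P.natDegree ≤ 2 * (g + 1) := (le_max_right _ _).trans h_max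
    exact ⟨hQ, hP, (isSmooth_iff hQ hP).2 ⟨h_zero, h_infty⟩⟩
  · rintro ⟨hQ, hP, h⟩
    obtain ⟨h_zero, h_infty⟩ := (isSmooth_iff hQ hP).1 h
    exact ⟨h.le_max_natDegree, max_le (by omega) (by omega), h_zero, h_infty,
      h.not_split g.succ_ne_zero hQ hP⟩

end IsHypModel

section Isomorphism

variable {n : ℕ} {e : F} {r Q₁ P₁ Q₂ P₂ : F[X]}

theorem QuadSubst.homEval_psiF {A : Matrix (Fin 2) (Fin 2) F} {L : Type*} [CommRing L]
    [Algebra F L] (s : QuadSubst (C e) r Q₁ P₁ (psiF n A Q₂) (psiF (2 * n) A P₂))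
    (hr : r.natDegree ≤ n) (hQ₁ : Q₁.natDegree ≤ n) (hP₁ : P₁.natDegree ≤ 2 * n)
    (w : Fin 2 → L) :
    QuadSubst (algebraMap F L e) (homEval n w r) (homEval n w Q₁) (homEval (2 * n) w P₁)
      (homEval n (A.map (algebraMap F L) *ᵥ w) Q₂)
      (homEval (2 * n) (A.map (algebraMap F L) *ᵥ w) P₂) := by
  have := s.homEval (d := 0) (m := n) (by simp) (by simpa) hQ₁ hP₁
    (by simpa using natDegree_psiF_le n A Q₂) w
  simpa [homEval_C, _root_.homEval_psiF] using this

theorem IsSmooth.of_quadSubst {A : GL (Fin 2) F} (h : IsSmooth n Q₁ P₁) (he : e ≠ 0)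
    (hr : r.natDegree ≤ n) (hQ₁ : Q₁.natDegree ≤ n) (hP₁ : P₁.natDegree ≤ 2 * n)
    (s : QuadSubst (C e) r Q₁ P₁ (psiF n A Q₂) (psiF (2 * n) A P₂)) : IsSmooth n Q₂ P₂ := by
  intro v hv y
  set v₁ := (A⁻¹).val.map (algebraMap F (AlgebraicClosure F)) *ᵥ v with hv₁
  have hAv₁ : A.val.map (algebraMap F (AlgebraicClosure F)) *ᵥ v₁ = v := by
    rw [hv₁, mulVec_mulVec, ← Matrix.map_mul, Units.mul_inv]
    simp
  have heK : algebraMap F (AlgebraicClosure F) e ≠ 0 := by simpa using he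
  obtain ⟨w, z, hw, hz, h_off⟩ := h v₁ (fun h0 => hv (by rw [← hAv₁, h0, mulVec_zero]))
    ((algebraMap F (AlgebraicClosure F) e)⁻¹ * (y - homEval n v₁ r))
  refine ⟨A.val.map (algebraMap F _) *ᵥ w, algebraMap F _ e * z + homEval n w r, ?_, ?_, ?_⟩
  · rw [← hAv₁, ← hw]
    ext i
    simp [mulVec, dotProduct, Fin.sum_univ_two, TrivSqZeroExt.algebraMap_eq_inl']
  · simp [fst_homEval, hw, hz, heK, TrivSqZeroExt.algebraMap_eq_inl']
  · have h_unit : IsUnit (algebraMap F (AlgebraicClosure F)[ε] e) :=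
      (isUnit_iff_ne_zero.2 he).map _
    rw [OnCurve, ← sub_eq_zero] at h_off ⊢
    rwa [(s.homEval_psiF hr hQ₁ hP₁ w).eval, (h_unit.pow 2).mul_right_eq_zero]

end Isomorphism

end Smoothness

section DoubleRoot

variable {F : Type*} [Field F]

theorem eq_of_double_root {b c z w : F} (hz : 2 * z + b = 0) (hzc : z ^ 2 + b * z = c)
    (hwc : w ^ 2 + b * w = c) : w = z :=
  sub_eq_zero.1 <| pow_eq_zero_iff two_ne_zero |>.1 <|
    show (w - z) ^ 2 = 0 by linear_combination hwc - hzc + (z - w) * hz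

theorem exists_double_root [PerfectField F] {b c : F} (h : b ^ 2 + 4 * c = 0) :
    ∃ z, 2 * z + b = 0 ∧ z ^ 2 + b * z = c := by
  by_cases h2 : (2 : F) = 0
  · have : CharP F 2 := CharTwo.of_one_ne_zero_of_two_eq_zero one_ne_zero h2
    have hb : b = 0 := pow_eq_zero_iff two_ne_zero |>.1 <| by linear_combination h - 2 * c * h2
    obtain ⟨z, hz⟩ := surjective_frobenius F 2 c
    rw [frobenius_def] at hz
    exact ⟨z, by linear_combination z * h2 + hb, by linear_combination hz + z * hb⟩
  · refine ⟨-b / 2, by field_simp; ring, mul_left_cancel₀ (pow_ne_zero 2 h2) ?_⟩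
    field_simp
    linear_combination -h

theorem exists_aeval_eq_of_double_root [PerfectField F] {K : Type*} [Field K] [Algebra F K]
    {Q P : F[X]} {x y : K} (hx : IsAlgebraic F x) (h_double : 2 * y + aeval x Q = 0)
    (h_curve : y ^ 2 + aeval x Q * y = aeval x P) : ∃ r : F[X], aeval x r = y := by
  let E := IntermediateField.adjoin F {x}
  have : Algebra.IsAlgebraic F E := IntermediateField.isAlgebraic_adjoin_simple hx.isIntegral
  have : PerfectField E := Algebra.IsAlgebraic.perfectField F
  have h_gen (p : F[X]) :
      algebraMap E K (aeval (IntermediateField.AdjoinSimple.gen F x) p) = aeval x p := by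
    rw [← aeval_algebraMap_apply, IntermediateField.AdjoinSimple.algebraMap_gen]
  obtain ⟨z, hz_double, hz_curve⟩ := exists_double_root
    (b := aeval (IntermediateField.AdjoinSimple.gen F x) Q)
    (c := aeval (IntermediateField.AdjoinSimple.gen F x) P) <| by
      apply (algebraMap E K).injective
      simp only [map_add, map_mul, map_pow, map_ofNat, map_zero, h_gen]
      linear_combination (2 * y + aeval x Q) * h_double - 4 * h_curve
  have hzy : y = algebraMap E K z := by
    refine eq_of_double_root (b := aeval x Q) (c := aeval x P) ?_ ?_ h_curve
    · simpa only [map_add, map_mul, map_ofNat, map_zero, h_gen] using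
        congrArg (algebraMap E K) hz_double
    · simpa only [map_add, map_mul, map_pow, h_gen] using congrArg (algebraMap E K) hz_curve
  have hy : y ∈ Algebra.adjoin F {x} := by
    rw [← IntermediateField.adjoin_simple_toSubalgebra_of_isAlgebraic hx, hzy]
    exact z.2
  rwa [Algebra.adjoin_singleton_eq_range_aeval] at hy

end DoubleRoot

section Normalization

open DualNumber TrivSqZeroExt

namespace QuadSubst

theorem map {R S : Type*} [CommRing R] [CommRing S] {h r Q' P' Q P : R}
    (s : QuadSubst h r Q' P' Q P) (f : R →+* S) :
    QuadSubst (f h) (f r) (f Q') (f P') (f Q) (f P) where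
  linear := by simpa only [map_mul, map_add, map_ofNat] using congrArg f s.linear
  const := by simpa only [map_mul, map_sub, map_pow] using congrArg f s.const

theorem sub {R : Type*} [CommRing R] {h₁ h₂ r₁ r₂ Q₁ Q₂ P₁ P₂ Q P : R}
    (s₁ : QuadSubst h₁ r₁ Q₁ P₁ Q P) (s₂ : QuadSubst h₂ r₂ Q₂ P₂ Q P) :
    QuadSubst h₁ (r₁ - r₂) Q₁ P₁ (h₂ * Q₂) (h₂ ^ 2 * P₂) where
  linear := by linear_combination s₁.linear - s₂.linear
  const := by linear_combination s₁.const - s₂.const + (r₁ - r₂) * s₂.linear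

variable {F : Type*} [Field F] {h r h₁ h₂ r₁ r₂ Q₁ Q₂ P₁ P₂ Q P : F[X]}

/-- Over a zero of `h₂` the curve `y² + h₂ Q₂ y = h₂² P₂` is singular at `y = 0`, and `h₁` is
invertible near that zero. -/
theorem isUnit_of_isCoprime (s : QuadSubst h₁ r Q₁ P₁ (h₂ * Q₂) (h₂ ^ 2 * P₂))
    (h_coprime : IsCoprime h₁ h₂) (h_smooth : SmoothChartF Q₁ P₁) : IsUnit h₂ := by
  rw [← isCoprime_zero_right,
    isCoprime_iff_aeval_ne_zero_of_isAlgClosed F (AlgebraicClosure F)]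
  refine fun x => .inl fun hx₂ => ?_
  have hx₁ : aeval x h₁ ≠ 0 :=
    ((isCoprime_iff_aeval_ne_zero_of_isAlgClosed F (AlgebraicClosure F) _ _).1 h_coprime x
      ).resolve_right (not_not.2 hx₂)
  obtain ⟨σ, t, rfl, ht, h_off⟩ :=
    smoothChartF_iff_dualNumber.1 h_smooth x (-(aeval x h₁)⁻¹ * aeval x r)
  have h_fst (p : F[X]) : (aeval σ p).fst = aeval σ.fst p := by simp [aeval_dualNumber]
  have h_unit : IsUnit (aeval σ h₁) := by
    rwa [isUnit_iff_isUnit_fst, h_fst, isUnit_iff_ne_zero]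
  have h_eval := (s.map (aeval σ).toRingHom).eval t
  have h_zero : (aeval σ h₁ * t + aeval σ r).fst = 0 := by
    simp [h_fst, ht, hx₁]
  refine h_off (sub_eq_zero.1 ((h_unit.pow 2).mul_right_eq_zero.1 (h_eval.symm.trans ?_)))
  simp only [AlgHom.toRingHom_eq_coe, RingHom.coe_coe, map_mul, sq]
  have hh₂ : (aeval σ h₂).fst = 0 := (h_fst _).trans hx₂
  rw [dualNumber_mul_eq_zero h_zero h_zero, dualNumber_mul_eq_zero hh₂ hh₂, mul_right_comm,
    dualNumber_mul_eq_zero hh₂ h_zero]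
  ring

end QuadSubst

theorem dvd_of_sq_eq_add {R : Type*} [CommRing R] [IsDomain R] [IsIntegrallyClosed R]
    {k t c w : R} (hk : k ≠ 0) (h : t ^ 2 = k * (c * t) + k ^ 2 * w) : k ∣ t := by
  set φ := algebraMap R (FractionRing R)
  have hφk : φ k ≠ 0 := by simpa [φ] using hk
  have h_integral : IsIntegral R (φ t / φ k) := by
    refine ⟨X ^ 2 - (C c * X + C w), monic_X_pow_sub (by compute_degree!), ?_⟩
    have := congrArg φ h
    simp only [map_add, map_mul, map_pow] at this
    simp only [eval₂_sub, eval₂_add, eval₂_mul, eval₂_pow, eval₂_X, eval₂_C]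
    field_simp
    linear_combination this
  obtain ⟨s, hs⟩ := IsIntegrallyClosed.isIntegral_iff.1 h_integral
  refine ⟨s, IsFractionRing.injective R (FractionRing R) ?_⟩
  rw [map_mul, hs, mul_div_cancel₀ _ hφk]

variable {F : Type*} [Field F]

theorem QuadSubst.dvd_of_smoothChartF {h₁ h₂ r₁ r₂ Q₁ Q₂ P₁ P₂ Q P : F[X]} (hh₂ : h₂ ≠ 0)
    (s₁ : QuadSubst h₁ r₁ Q₁ P₁ Q P) (s₂ : QuadSubst h₂ r₂ Q₂ P₂ Q P)
    (h_smooth : SmoothChartF Q₁ P₁) : h₂ ∣ h₁ ∧ h₂ ∣ r₁ - r₂ := by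
  classical
  let := EuclideanDomain.gcdMonoid F[X]
  have s := s₁.sub s₂
  obtain ⟨a₁, a₂, ha₁, ha₂, h_unit⟩ := extract_gcd h₁ h₂
  set k := gcd h₁ h₂
  have hk : k ≠ 0 := left_ne_zero_of_mul (ha₂ ▸ hh₂)
  obtain ⟨t, ht⟩ : k ∣ r₁ - r₂ := by
    refine dvd_of_sq_eq_add (c := -(a₂ * Q₂)) (w := a₂ ^ 2 * P₂ - a₁ ^ 2 * P₁) hk ?_
    rw [ha₁, ha₂] at s
    linear_combination s.const
  have s_coprime : QuadSubst a₁ t Q₁ P₁ (a₂ * Q₂) (a₂ ^ 2 * P₂) := by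
    rw [ht, ha₁, ha₂] at s
    refine ⟨mul_left_cancel₀ hk ?_, mul_left_cancel₀ (pow_ne_zero 2 hk) ?_⟩
    · linear_combination s.linear
    · linear_combination s.const
  have h_assoc : h₂ ∣ k := by
    rw [ha₂]
    exact (s_coprime.isUnit_of_isCoprime (gcd_isUnit_iff _ _ |>.1 h_unit)
      h_smooth).mul_right_dvd.2 dvd_rfl
  exact ⟨h_assoc.trans ⟨a₁, ha₁⟩, h_assoc.trans ⟨t, ht⟩⟩

/-- The curve of weight `d + m` with coefficients `(Q, P)` is obtained by the substitution
`y ↦ h y + r` from the smooth curve of weight `m` with coefficients `(Q', P')`. The bound on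
`deg r` makes `r` a canonical representative modulo `h`. -/
structure IsNormalization (d m : ℕ) (h r Q' P' Q P : F[X]) : Prop where
  quadSubst : QuadSubst h r Q' P' Q P
  monic : h.Monic
  natDegree_eq : h.natDegree = d
  degree_lt : r.degree < d
  natDegree_linear_le : Q'.natDegree ≤ m
  natDegree_const_le : P'.natDegree ≤ 2 * m
  isSmooth : IsSmooth m Q' P'

theorem IsNormalization.smoothChartF {d m : ℕ} {h r Q' P' Q P : F[X]}
    (s : IsNormalization d m h r Q' P' Q P) : SmoothChartF Q' P' :=
  ((isSmooth_iff s.natDegree_linear_le s.natDegree_const_le).1 s.isSmooth).1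

theorem IsNormalization.unique {d₁ d₂ m₁ m₂ : ℕ} {h₁ h₂ r₁ r₂ Q₁ Q₂ P₁ P₂ Q P : F[X]}
    (s₁ : IsNormalization d₁ m₁ h₁ r₁ Q₁ P₁ Q P) (s₂ : IsNormalization d₂ m₂ h₂ r₂ Q₂ P₂ Q P) :
    h₁ = h₂ ∧ r₁ = r₂ ∧ Q₁ = Q₂ ∧ P₁ = P₂ := by
  obtain ⟨h₂_dvd, -⟩ :=
    s₁.quadSubst.dvd_of_smoothChartF s₂.monic.ne_zero s₂.quadSubst s₁.smoothChartF
  obtain ⟨h₁_dvd, r_dvd⟩ :=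
    s₂.quadSubst.dvd_of_smoothChartF s₁.monic.ne_zero s₁.quadSubst s₂.smoothChartF
  obtain rfl : h₁ = h₂ :=
    eq_of_monic_of_associated s₁.monic s₂.monic (associated_of_dvd_dvd h₁_dvd h₂_dvd)
  obtain rfl : d₁ = d₂ := s₁.natDegree_eq.symm.trans s₂.natDegree_eq
  obtain rfl : r₁ = r₂ := by
    refine (sub_eq_zero.1 (eq_zero_of_dvd_of_degree_lt r_dvd ?_)).symm
    rw [degree_eq_natDegree s₁.monic.ne_zero, s₁.natDegree_eq]
    exact (degree_sub_le _ _).trans_lt (max_lt s₂.degree_lt s₁.degree_lt)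
  exact ⟨rfl, rfl, s₁.quadSubst.eq_of_isRegular s₁.monic.isRegular s₂.quadSubst⟩

theorem natDegree_le_of_monic_mul {h q : F[X]} (hh : h.Monic) {m : ℕ}
    (h_le : (h * q).natDegree ≤ h.natDegree + m) : q.natDegree ≤ m := by
  by_cases hq : q = 0
  · simp [hq]
  · rw [hh.natDegree_mul' hq] at h_le
    omega

section Degree

variable {d m : ℕ} {h r Q' P' Q P : F[X]}

theorem QuadSubst.natDegree_source_le (s : QuadSubst h r Q' P' Q P) (hh : h.Monic)
    (hd : h.natDegree = d) (hr : r.natDegree ≤ d + m) (hQ : Q.natDegree ≤ d + m)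
    (hP : P.natDegree ≤ 2 * (d + m)) : Q'.natDegree ≤ m ∧ P'.natDegree ≤ 2 * m := by
  constructor
  · refine natDegree_le_of_monic_mul hh ?_
    rw [s.linear, hd]
    exact natDegree_add_le_of_degree_le
      ((natDegree_mul_le_of_le (natDegree_ofNat 2).le hr).trans_eq (zero_add _)) hQ
  · refine natDegree_le_of_monic_mul (hh.pow 2) ?_
    rw [s.const, hh.natDegree_pow, hd, ← mul_add]
    refine natDegree_sub_le_of_le (natDegree_sub_le_of_le hP (natDegree_pow_le_of_le 2 hr))
      (natDegree_mul_le_of_le hQ hr) |>.trans_eq ?_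
    rw [max_self, ← two_mul, max_self]

theorem QuadSubst.natDegree_target_le (s : QuadSubst h r Q' P' Q P) (hh : h.natDegree ≤ d)
    (hr : r.natDegree ≤ d + m) (hQ' : Q'.natDegree ≤ m) (hP' : P'.natDegree ≤ 2 * m) :
    Q.natDegree ≤ d + m ∧ P.natDegree ≤ 2 * (d + m) := by
  have hQ : Q.natDegree ≤ d + m := by
    rw [← sub_eq_iff_eq_add'.2 s.linear]
    refine natDegree_sub_le_of_le (natDegree_mul_le_of_le hh hQ')
      ((natDegree_mul_le_of_le (natDegree_ofNat 2).le hr).trans_eq (zero_add _)) |>.trans_eq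
      (max_self _)
  refine ⟨hQ, ?_⟩
  rw [show P = h ^ 2 * P' + r ^ 2 + Q * r by linear_combination -s.const]
  refine natDegree_add_le_of_degree_le (natDegree_add_le_of_degree_le ?_
    (natDegree_pow_le_of_le 2 hr)) ((natDegree_mul_le_of_le hQ hr).trans_eq (two_mul _).symm)
  exact (natDegree_mul_le_of_le (natDegree_pow_le_of_le 2 hh) hP').trans_eq (mul_add _ _ _).symm

theorem QuadSubst.coeff_eq (s : QuadSubst h r Q' P' Q P) (hh : h.Monic) (hd : h.natDegree = d)
    (hr : r.degree < d) (hQ' : Q'.natDegree ≤ m) (hP' : P'.natDegree ≤ 2 * m)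
    (hQ : Q.natDegree ≤ d + m) :
    Q'.coeff m = Q.coeff (d + m) ∧ P'.coeff (2 * m) = P.coeff (2 * (d + m)) := by
  have s_infty := s.homEval hd.le ((natDegree_le_of_degree_le hr.le).trans (by omega)) hQ' hP' hQ
    ![(1 : F), 0]
  simp only [homEval_one_zero, Algebra.algebraMap_self, RingHom.id_apply, ← hd, hh.coeff_natDegree]
    at s_infty
  rw [hd, coeff_eq_zero_of_degree_lt (hr.trans_le (by norm_cast; omega))] at s_infty
  exact ⟨by simpa using s_infty.linear, by simpa using s_infty.const⟩

theorem QuadSubst.natDegree_le_of_disc_ne_zero {n : ℕ} (s : QuadSubst h r Q' P' Q P)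
    (hQ : Q.natDegree ≤ n) (hP : P.natDegree ≤ 2 * n)
    (h_disc : Q.coeff n ^ 2 + 4 * P.coeff (2 * n) ≠ 0) : h.natDegree ≤ n := by
  have h_coeff : (Q ^ 2 + 4 * P).coeff (2 * n) = Q.coeff n ^ 2 + 4 * P.coeff (2 * n) := by
    rw [coeff_add, coeff_pow_of_natDegree_le hQ, coeff_ofNat_mul]
  have h_ne : Q ^ 2 + 4 * P ≠ 0 := fun h0 => h_disc (by rw [← h_coeff, h0, coeff_zero])
  have h_deg : (Q ^ 2 + 4 * P).natDegree ≤ 2 * n := natDegree_add_le_of_degree_le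
    (natDegree_pow_le_of_le 2 hQ)
    ((natDegree_mul_le_of_le (natDegree_ofNat 4).le hP).trans_eq (zero_add _))
  have := natDegree_le_of_dvd ⟨_, s.disc.symm⟩ h_ne
  rw [natDegree_pow] at this
  omega

end Degree

variable [PerfectField F]

theorem minpoly_sq_dvd {K : Type*} [Field K] [Algebra F K] {x : K} (hx : IsIntegral F x)
    {p : F[X]} (h_root : aeval x p = 0) (h_double : aeval x (derivative p) = 0) :
    minpoly F x ^ 2 ∣ p := by
  obtain ⟨w, rfl⟩ := minpoly.dvd F x h_root
  have h_sep := (PerfectField.separable_of_irreducible (minpoly.irreducible hx)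
    ).aeval_derivative_ne_zero (minpoly.aeval F x)
  rw [sq]
  refine mul_dvd_mul_left _ (minpoly.dvd F x ?_)
  simpa [minpoly.aeval, h_sep] using h_double

theorem exists_quadSubst_of_not_smoothChartF {Q P : F[X]} (h_sing : ¬SmoothChartF Q P) :
    ∃ p r Q' P' : F[X],
      p.Monic ∧ 0 < p.natDegree ∧ r.degree < p.natDegree ∧ QuadSubst p r Q' P' Q P := by
  simp only [SmoothChartF, not_forall, not_not] at h_sing
  obtain ⟨x, y, h_curve, h_dy, h_dx⟩ := h_sing
  have hx : IsIntegral F x := Algebra.IsIntegral.isIntegral x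
  have h_monic := minpoly.monic hx
  obtain ⟨r₀, rfl⟩ :=
    exists_aeval_eq_of_double_root hx.isAlgebraic h_dy (sub_eq_zero.1 h_curve)
  have h_deg : (r₀ %ₘ minpoly F x).degree < (minpoly F x).natDegree :=
    (degree_modByMonic_lt r₀ h_monic).trans_eq (degree_eq_natDegree h_monic.ne_zero)
  have h_mod : aeval x (r₀ %ₘ minpoly F x) = aeval x r₀ :=
    aeval_modByMonic_eq_self_of_root (minpoly.aeval F x)
  rw [← h_mod] at h_curve h_dy h_dx
  generalize r₀ %ₘ minpoly F x = r at h_deg h_curve h_dy h_dx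
  obtain ⟨Q', hQ'⟩ : minpoly F x ∣ 2 * r + Q :=
    minpoly.dvd F x (by simpa only [map_add, map_mul, map_ofNat] using h_dy)
  obtain ⟨P', hP'⟩ : minpoly F x ^ 2 ∣ P - r ^ 2 - Q * r := by
    refine minpoly_sq_dvd hx ?_ ?_
    · simp only [map_sub, map_mul, map_pow]
      linear_combination -h_curve
    · simp only [derivative_mul, derivative_sq, map_add, map_sub, map_mul, map_ofNat]
      linear_combination -h_dx - aeval x (derivative r) * h_dy
  exact ⟨_, r, Q', P', h_monic, minpoly.natDegree_pos hx, h_deg, hQ'.symm, hP'.symm⟩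

theorem exists_isNormalization (n : ℕ) {Q P : F[X]} (hQ : Q.natDegree ≤ n)
    (hP : P.natDegree ≤ 2 * n) (h_disc : Q.coeff n ^ 2 + 4 * P.coeff (2 * n) ≠ 0) :
    ∃ d m, d + m = n ∧ ∃ h r Q' P' : F[X], IsNormalization d m h r Q' P' Q P := by
  induction n using Nat.strong_induction_on generalizing Q P with
  | _ n ih =>
  by_cases h_smooth : SmoothChartF Q P
  · exact ⟨0, n, zero_add n, 1, 0, Q, P, .refl Q P, monic_one, natDegree_one, by simp, hQ, hP,
      isSmooth_of_smoothChartF hQ hP h_smooth h_disc⟩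
  obtain ⟨p, r, Q₁, P₁, hp, hp_pos, hr, s⟩ := exists_quadSubst_of_not_smoothChartF h_smooth
  obtain ⟨n₁, rfl⟩ := Nat.exists_eq_add_of_le (s.natDegree_le_of_disc_ne_zero hQ hP h_disc)
  obtain ⟨hQ₁, hP₁⟩ := s.natDegree_source_le hp rfl
    ((natDegree_le_of_degree_le hr.le).trans (Nat.le_add_right _ _)) hQ hP
  obtain ⟨hQ_coeff, hP_coeff⟩ := s.coeff_eq hp rfl hr hQ₁ hP₁ hQ
  obtain ⟨d, m, rfl, h', r', Q', P', t⟩ :=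
    ih n₁ (by omega) hQ₁ hP₁ (by rwa [hQ_coeff, hP_coeff])
  refine ⟨p.natDegree + d, m, add_assoc _ _ _, p * h', r + p * r', Q', P',
    t.quadSubst.trans s, hp.mul t.monic, ?_, ?_, t.natDegree_linear_le, t.natDegree_const_le,
    t.isSmooth⟩
  · rw [hp.natDegree_mul t.monic, t.natDegree_eq]
  · refine (degree_add_le _ _).trans_lt (max_lt (hr.trans_le (by norm_cast; omega)) ?_)
    rw [degree_mul, degree_eq_natDegree hp.ne_zero, Nat.cast_add]
    exact WithBot.add_lt_add_left (WithBot.natCast_ne_bot _) t.degree_lt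

end Normalization

section Excess

variable {F : Type*} [Field F]

/-- One less than the number of roots of `y² + b y = c`; for a fibre of a double cover of the
line, this is minus its contribution to the trace of Frobenius. -/
def excess (b c : F) : ℚ := (Nat.card {y : F // y ^ 2 + b * y = c} : ℚ) - 1

theorem QuadSubst.excess_eq {h r b' c' b c : F} (s : QuadSubst h r b' c' b c) (hh : h ≠ 0) :
    excess b' c' = excess b c := by
  have h_root (y : F) : y ^ 2 + b' * y = c' ↔ (h * y + r) ^ 2 + b * (h * y + r) = c := by
    rw [← sub_eq_zero, ← sub_eq_zero (b := c), s.eval, mul_eq_zero_iff_left (pow_ne_zero 2 hh)]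
  exact congrArg (fun k : ℕ => (k : ℚ) - 1) (Nat.card_congr
    (((Equiv.mulLeft₀ h hh).trans (Equiv.addRight r)).subtypeEquiv
      (q := fun y => y ^ 2 + b * y = c) h_root))

theorem excess_eq_zero_of_disc_eq_zero [PerfectField F] {b c : F} (h : b ^ 2 + 4 * c = 0) :
    excess b c = 0 := by
  obtain ⟨z, hz_double, hz⟩ := exists_double_root h
  have h_card : Nat.card {y : F // y ^ 2 + b * y = c} = 1 :=
    Nat.card_eq_one_iff_exists.2
      ⟨⟨z, hz⟩, fun w => Subtype.ext (eq_of_double_root hz_double hz w.2)⟩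
  rw [excess, h_card, Nat.cast_one, sub_self]

variable [Fintype F]

open Classical in
theorem excess_eq_sum (b c : F) :
    excess b c = (∑ y : F, if y ^ 2 + b * y = c then (1 : ℚ) else 0) - 1 := by
  rw [excess, Nat.card_eq_fintype_card, Fintype.card_subtype, Finset.sum_boole]

theorem sum_excess (b : F) : ∑ c : F, excess b c = 0 := by
  classical
  simp only [excess_eq_sum, Finset.sum_sub_distrib]
  rw [Finset.sum_comm]
  simp

open Classical in
theorem sum_excess_sq_right (b : F) : ∑ c : F, excess b c ^ 2 =
    (∑ y : F, ∑ z : F, if (y - z) * (y + z + b) = 0 then (1 : ℚ) else 0) - Fintype.card F := by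
  have h_factor (y z : F) : z ^ 2 + b * z = y ^ 2 + b * y ↔ (y - z) * (y + z + b) = 0 := by
    rw [← sub_eq_zero, ← neg_eq_zero]
    ring_nf
  have h_pairs : ∑ c : F, (∑ y : F, if y ^ 2 + b * y = c then (1 : ℚ) else 0) ^ 2 =
      ∑ y : F, ∑ z : F, if (y - z) * (y + z + b) = 0 then (1 : ℚ) else 0 := by
    simp only [sq (∑ _, _), Finset.sum_mul_sum]
    rw [Finset.sum_comm]
    refine Finset.sum_congr rfl fun y _ => ?_
    rw [Finset.sum_comm]
    simp [eq_comm (a := y ^ 2 + b * y), h_factor]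
  calc ∑ c : F, excess b c ^ 2
      = ∑ c : F, ((excess b c + 1) ^ 2 - 2 * excess b c - 1) := by congr! 1; ring
    _ = _ := by
      rw [Finset.sum_sub_distrib, Finset.sum_sub_distrib, ← Finset.mul_sum, sum_excess]
      simp only [excess_eq_sum, sub_add_cancel, h_pairs]
      simp

theorem sum_excess_sq :
    ∑ b : F, ∑ c : F, excess b c ^ 2 = (Fintype.card F : ℚ) ^ 2 - Fintype.card F := by
  classical
  have h_count (y z : F) : ∑ b : F, (if (y - z) * (y + z + b) = 0 then (1 : ℚ) else 0) =
      1 + if y = z then (Fintype.card F : ℚ) - 1 else 0 := by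
    by_cases hyz : y = z
    · simp [hyz]
    · simp [hyz, sub_eq_zero, add_eq_zero_iff_neg_eq]
  simp only [sum_excess_sq_right, Finset.sum_sub_distrib]
  rw [Finset.sum_comm]
  simp only [Finset.sum_comm (s := Finset.univ (α := F)) (f := fun _ _ => ite _ _ _), h_count,
    Finset.sum_add_distrib, Finset.sum_const, Finset.sum_ite_eq, Finset.mem_univ, if_true,
    Finset.card_univ, nsmul_eq_mul, mul_one]
  ring

end Excess

section Averaging

theorem card_mul_sum_comp {G H : Type*} [AddGroup G] [Fintype G] [AddGroup H] [Fintype H]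
    (φ : G →+ H) (hφ : Function.Surjective φ) (f : H → ℚ) :
    (Fintype.card H : ℚ) * ∑ x, f (φ x) = Fintype.card G * ∑ y, f y := by
  have h_translate (y : H) : ∑ x, f (φ x + y) = ∑ x, f (φ x) := by
    obtain ⟨x₀, rfl⟩ := hφ y
    simp only [← map_add]
    exact Equiv.sum_comp (Equiv.addRight x₀) fun x => f (φ x)
  calc (Fintype.card H : ℚ) * ∑ x, f (φ x)
      = ∑ y, ∑ x, f (φ x + y) := by
        simp only [h_translate, Finset.sum_const, Finset.card_univ, nsmul_eq_mul]
    _ = ∑ x, ∑ y, f (φ x + y) := Finset.sum_comm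
    _ = Fintype.card G * ∑ y, f y := by
        simp only [fun x => Equiv.sum_comp (Equiv.addLeft (φ x)) f, ← Equiv.coe_addLeft,
          Finset.sum_const, Finset.card_univ, nsmul_eq_mul]

variable {F : Type*} [Field F]

/-- The `i`-th coefficient, as a linear form on the polynomials of degree less than `d`. -/
def coeffOnDegreeLT (d i : ℕ) : degreeLT F d →ₗ[F] F := (lcoeff F i).domRestrict _

theorem coeffOnDegreeLT_apply (d i : ℕ) (p : degreeLT F d) :
    coeffOnDegreeLT d i p = (p : F[X]).coeff i := rfl

theorem coeffOnDegreeLT_prod_surjective {d i j : ℕ} (hi : i < d) (hj : j < d) (hij : i ≠ j) :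
    Function.Surjective ((coeffOnDegreeLT (F := F) d i).prod (coeffOnDegreeLT d j)) := by
  rintro ⟨a, b⟩
  refine ⟨⟨monomial i a, monomial_coe_mem_degreeLT ⟨i, hi⟩ a⟩ +
    ⟨monomial j b, monomial_coe_mem_degreeLT ⟨j, hj⟩ b⟩, ?_⟩
  simp [coeffOnDegreeLT_apply, coeff_monomial, hij, hij.symm]

theorem coeffOnDegreeLT_surjective {d i : ℕ} (hi : i < d) :
    Function.Surjective (coeffOnDegreeLT (F := F) d i) := fun a =>
  ⟨⟨monomial i a, monomial_coe_mem_degreeLT ⟨i, hi⟩ a⟩, by simp [coeffOnDegreeLT_apply]⟩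

variable [Fintype F]

instance fintypeDegreeLT (d : ℕ) : Fintype (degreeLT F d) :=
  Fintype.ofEquiv _ (degreeLTEquiv F d).symm.toEquiv

theorem card_degreeLT (d : ℕ) : Fintype.card (degreeLT F d) = Fintype.card F ^ d := by
  rw [Fintype.card_congr (degreeLTEquiv F d).toEquiv, Fintype.card_fun, Fintype.card_fin]

theorem sum_degreeLT_coeff {d i : ℕ} (hi : i ≤ d) (f : F → ℚ) :
    ∑ p : degreeLT F (d + 1), f ((p : F[X]).coeff i) = (Fintype.card F : ℚ) ^ d * ∑ a, f a := by
  have hq : (Fintype.card F : ℚ) ≠ 0 := by simp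
  have h := card_mul_sum_comp (coeffOnDegreeLT (F := F) (d + 1) i).toAddMonoidHom
    (coeffOnDegreeLT_surjective (Nat.lt_succ_of_le hi)) f
  rw [card_degreeLT, Nat.cast_pow, pow_succ', mul_assoc] at h
  exact mul_left_cancel₀ hq h

theorem sum_degreeLT_coeff_coeff {d i j : ℕ} (hi : i ≤ d + 1) (hj : j ≤ d + 1) (hij : i ≠ j)
    (f : F → F → ℚ) :
    ∑ p : degreeLT F (d + 2), f ((p : F[X]).coeff i) ((p : F[X]).coeff j) =
      (Fintype.card F : ℚ) ^ d * ∑ a, ∑ b, f a b := by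
  have hq : (Fintype.card F : ℚ) ≠ 0 := by simp
  have h := card_mul_sum_comp ((coeffOnDegreeLT (F := F) (d + 2) i).prod
    (coeffOnDegreeLT (d + 2) j)).toAddMonoidHom
    (coeffOnDegreeLT_prod_surjective (by omega) (by omega) hij) fun x => f x.1 x.2
  rw [card_degreeLT, Nat.cast_pow, Fintype.card_prod, Nat.cast_mul, ← sq, pow_add, mul_comm (_ ^ d),
    mul_assoc, Fintype.sum_prod_type] at h
  exact mul_left_cancel₀ (pow_ne_zero 2 hq) h

end Averaging

section CoeffPair

variable {F : Type*} [Field F]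

theorem mem_degreeLT_succ_iff {n : ℕ} {p : F[X]} : p ∈ degreeLT F (n + 1) ↔ p.natDegree ≤ n := by
  rw [degreeLT_succ_eq_degreeLE, mem_degreeLE, natDegree_le_iff_degree_le]

/-- All pairs `(Q, P)` in the degree range of the equations `y² + Q y = P` of weight `n`. -/
abbrev CoeffPair (F : Type*) [Field F] (n : ℕ) := degreeLT F (n + 1) × degreeLT F (2 * n + 1)

/-- The excess of the fibre of `y² + Q y = P`, an equation of weight `n`, over the point of the
projective line with homogeneous coordinates `v`. -/
def fiberExcess (n : ℕ) (v : Fin 2 → F) (Q P : F[X]) : ℚ :=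
  excess (homEval n v Q) (homEval (2 * n) v P)

theorem fiberExcess_infty (n : ℕ) (Q P : F[X]) :
    fiberExcess n ![1, 0] Q P = excess (Q.coeff n) (P.coeff (2 * n)) := by
  simp [fiberExcess, homEval_one_zero]

theorem fiberExcess_zero (n : ℕ) (Q P : F[X]) :
    fiberExcess n ![0, 1] Q P = excess (Q.coeff 0) (P.coeff 0) := by
  simp [fiberExcess, homEval_zero_one]

variable [Fintype F]

theorem sum_coeffPair_infty_sq (n : ℕ) :
    ∑ x : CoeffPair F n, fiberExcess n ![(1 : F), 0] x.1 x.2 ^ 2 =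
      (Fintype.card F : ℚ) ^ (3 * n) * ((Fintype.card F : ℚ) ^ 2 - Fintype.card F) := by
  simp only [Fintype.sum_prod_type, fiberExcess_infty, ← sum_excess_sq]
  simp only [fun b : F => sum_degreeLT_coeff (le_refl (2 * n)) fun c => excess b c ^ 2,
    ← Finset.mul_sum]
  rw [sum_degreeLT_coeff le_rfl fun b => ∑ c, excess b c ^ 2]
  ring

theorem sum_coeffPair_infty_mul_zero {n : ℕ} (hn : n ≠ 0) :
    ∑ x : CoeffPair F n,
      fiberExcess n ![(1 : F), 0] x.1 x.2 * fiberExcess n ![(0 : F), 1] x.1 x.2 = 0 := by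
  obtain ⟨k, rfl⟩ := Nat.exists_eq_succ_of_ne_zero hn
  simp only [Fintype.sum_prod_type, fiberExcess_infty, fiberExcess_zero]
  refine Finset.sum_eq_zero fun Q _ => ?_
  rw [show 2 * (k + 1) + 1 = (2 * k + 1) + 2 by ring, sum_degreeLT_coeff_coeff (by omega) (by omega)
    (by omega) fun a b => excess ((Q : F[X]).coeff (k + 1)) a * excess ((Q : F[X]).coeff 0) b]
  simp only [← Finset.mul_sum, sum_excess, mul_zero, Finset.sum_const_zero]

end CoeffPair

section Sieve

open Finset.HasAntidiagonal

variable {F : Type*} [Field F]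

/-- A smooth curve `y² + Q y = P` of weight `n`; for `n = g + 1` these are the standard
hyperelliptic equations of genus `g`. -/
@[ext]
structure SmoothModel (F : Type*) [Field F] (n : ℕ) where
  Q : F[X]
  P : F[X]
  natDegree_Q_le : Q.natDegree ≤ n
  natDegree_P_le : P.natDegree ≤ 2 * n
  isSmooth : IsSmooth n Q P

namespace SmoothModel

variable {n : ℕ}

/-- The pair `(Q, P)` of a smooth curve. -/
def toCoeffPair (M : SmoothModel F n) : CoeffPair F n :=
  (⟨M.Q, mem_degreeLT_succ_iff.2 M.natDegree_Q_le⟩,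
    ⟨M.P, mem_degreeLT_succ_iff.2 M.natDegree_P_le⟩)

theorem toCoeffPair_injective : Function.Injective (toCoeffPair (F := F) (n := n)) :=
  fun _ _ h => SmoothModel.ext congr(($h).1.1) congr(($h).2.1)

instance [Fintype F] : Fintype (SmoothModel F n) := Fintype.ofInjective _ toCoeffPair_injective

/-- The excess of the fibre of the curve over the point with homogeneous coordinates `v`. -/
def fiberExcess (M : SmoothModel F n) (v : Fin 2 → F) : ℚ := _root_.fiberExcess n v M.Q M.P

end SmoothModel

/-- The monic polynomials of degree `d`, as in `Polynomial.monicEquivDegreeLT`. -/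
abbrev MonicOfDegree (F : Type*) [Field F] (d : ℕ) := {h : F[X] // h.Monic ∧ h.natDegree = d}

/-- Everything that determines a normalization of an equation of weight `d + m` by a smooth
curve of weight `m`: the substitution `y ↦ h y + r` and that curve. -/
abbrev NormalizationData (F : Type*) [Field F] (d m : ℕ) :=
  MonicOfDegree F d × degreeLT F d × SmoothModel F m

namespace NormalizationData

variable {d m n : ℕ}

/-- The linear coefficient `Q` of the equation that is being normalized. -/
def linear (x : NormalizationData F d m) : F[X] := x.1 * x.2.2.Q - 2 * x.2.1

/-- The constant term `P` of the equation that is being normalized. -/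
def const (x : NormalizationData F d m) : F[X] :=
  x.1 ^ 2 * x.2.2.P + x.2.1 ^ 2 + x.linear * x.2.1

theorem isNormalization (x : NormalizationData F d m) :
    IsNormalization d m x.1 x.2.1 x.2.2.Q x.2.2.P x.linear x.const where
  quadSubst := ⟨by rw [linear]; ring, by rw [const]; ring⟩
  monic := x.1.2.1
  natDegree_eq := x.1.2.2
  degree_lt := mem_degreeLT.1 x.2.1.2
  natDegree_linear_le := x.2.2.natDegree_Q_le
  natDegree_const_le := x.2.2.natDegree_P_le
  isSmooth := x.2.2.isSmooth

theorem natDegree_le (x : NormalizationData F d m) :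
    x.linear.natDegree ≤ d + m ∧ x.const.natDegree ≤ 2 * (d + m) :=
  have s := x.isNormalization
  s.quadSubst.natDegree_target_le s.natDegree_eq.le
    ((natDegree_le_of_degree_le s.degree_lt.le).trans (Nat.le_add_right d m))
    s.natDegree_linear_le s.natDegree_const_le

/-- The equation of weight `n` that is being normalized, for a normalization whose degree `d` and
weight `m` satisfy `d + m = n`. -/
def toCoeffPair (x : Σ dm : antidiagonal n, NormalizationData F dm.1.1 dm.1.2) :
    CoeffPair F n :=
  have h_sum := mem_antidiagonal.1 x.1.2
  (⟨x.2.linear, mem_degreeLT_succ_iff.2 (x.2.natDegree_le.1.trans_eq h_sum)⟩,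
    ⟨x.2.const, mem_degreeLT_succ_iff.2 (x.2.natDegree_le.2.trans_eq (congrArg (2 * ·) h_sum))⟩)

theorem toCoeffPair_injective : Function.Injective (toCoeffPair (F := F) (n := n)) := by
  rintro ⟨⟨⟨d₁, m₁⟩, h₁⟩, x₁⟩ ⟨⟨⟨d₂, m₂⟩, h₂⟩, x₂⟩ h_eq
  have h_linear : x₁.linear = x₂.linear := congr(($h_eq).1.1)
  have h_const : x₁.const = x₂.const := congr(($h_eq).2.1)
  obtain ⟨hh, hr, hQ, hP⟩ :=
    x₁.isNormalization.unique (h_linear ▸ h_const ▸ x₂.isNormalization)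
  obtain rfl : d₁ = d₂ :=
    x₁.1.2.2.symm.trans ((congrArg natDegree hh).trans x₂.1.2.2)
  obtain rfl : m₁ = m₂ :=
    Nat.add_left_cancel ((mem_antidiagonal.1 h₁).trans (mem_antidiagonal.1 h₂).symm)
  obtain rfl : x₁ = x₂ :=
    Prod.ext (Subtype.ext hh) (Prod.ext (Subtype.ext hr) (SmoothModel.ext hQ hP))
  rfl

theorem mem_range_toCoeffPair [PerfectField F] (x : CoeffPair F n)
    (hx : (x.1 : F[X]).coeff n ^ 2 + 4 * (x.2 : F[X]).coeff (2 * n) ≠ 0) :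
    x ∈ Set.range toCoeffPair := by
  obtain ⟨d, m, h_sum, h, r, Q', P', s⟩ := exists_isNormalization n
    (mem_degreeLT_succ_iff.1 x.1.2) (mem_degreeLT_succ_iff.1 x.2.2) hx
  let y : NormalizationData F d m := (⟨h, s.monic, s.natDegree_eq⟩, ⟨r, mem_degreeLT.2 s.degree_lt⟩,
    ⟨Q', P', s.natDegree_linear_le, s.natDegree_const_le, s.isSmooth⟩)
  have h_linear : y.linear = x.1 := by
    rw [linear]
    linear_combination s.quadSubst.linear
  have h_const : y.const = x.2 := by
    rw [const, h_linear]
    linear_combination s.quadSubst.const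
  exact ⟨⟨⟨(d, m), mem_antidiagonal.2 h_sum⟩, y⟩,
    Prod.ext (Subtype.ext h_linear) (Subtype.ext h_const)⟩

end NormalizationData

open Classical in
theorem IsNormalization.fiberExcess_eq [PerfectField F] {d m : ℕ} {h r Q' P' Q P : F[X]}
    (s : IsNormalization d m h r Q' P' Q P) (v : Fin 2 → F) :
    fiberExcess (d + m) v Q P = if homEval d v h = 0 then 0 else fiberExcess m v Q' P' := by
  have hr : r.natDegree ≤ d + m :=
    (natDegree_le_of_degree_le s.degree_lt.le).trans (Nat.le_add_right d m)
  have t := s.quadSubst.homEval s.natDegree_eq.le hr s.natDegree_linear_le s.natDegree_const_le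
    (s.quadSubst.natDegree_target_le s.natDegree_eq.le hr s.natDegree_linear_le
      s.natDegree_const_le).1 v
  split_ifs with hv
  · exact excess_eq_zero_of_disc_eq_zero (by rw [← t.disc, hv]; ring)
  · exact (t.excess_eq hv).symm

theorem IsNormalization.homEval_infty {d m : ℕ} {h r Q' P' Q P : F[X]}
    (s : IsNormalization d m h r Q' P' Q P) : homEval d ![(1 : F), 0] h = 1 := by
  rw [homEval_one_zero, ← s.natDegree_eq, s.monic.coeff_natDegree, map_one]

variable [Fintype F]

instance (d : ℕ) : Fintype (MonicOfDegree F d) := Fintype.ofEquiv _ (monicEquivDegreeLT d).symm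

/-- The number of monic polynomials of degree `d` whose homogenization does not vanish at the
point with homogeneous coordinates `v`. -/
def numMonicNonvanishing (d : ℕ) (v : Fin 2 → F) : ℕ :=
  Nat.card {h : MonicOfDegree F d // homEval d v h.1 ≠ 0}

theorem sum_normalizationData (d m : ℕ) (v : Fin 2 → F) :
    ∑ x : NormalizationData F d m, fiberExcess (d + m) ![1, 0] x.linear x.const *
        fiberExcess (d + m) v x.linear x.const =
      numMonicNonvanishing d v * (Fintype.card F : ℚ) ^ d *
        ∑ M : SmoothModel F m, M.fiberExcess ![1, 0] * M.fiberExcess v := by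
  classical
  let nonvanishing (h : MonicOfDegree F d) : ℚ := if homEval d v h.1 ≠ 0 then 1 else 0
  have h_card : ∑ h, nonvanishing h = numMonicNonvanishing d v := by
    rw [Finset.sum_boole, numMonicNonvanishing, Nat.card_eq_fintype_card, Fintype.card_subtype]
  have h_summand (x : NormalizationData F d m) : fiberExcess (d + m) ![1, 0] x.linear x.const *
      fiberExcess (d + m) v x.linear x.const =
        nonvanishing x.1 * (x.2.2.fiberExcess ![1, 0] * x.2.2.fiberExcess v) := by
    rw [x.isNormalization.fiberExcess_eq, x.isNormalization.fiberExcess_eq,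
      x.isNormalization.homEval_infty, if_neg one_ne_zero]
    simp only [nonvanishing, ite_not, ite_mul, mul_ite, zero_mul, one_mul, mul_zero]
    rfl
  simp only [h_summand, Fintype.sum_prod_type, ← Finset.mul_sum, Finset.sum_const,
    Finset.card_univ, card_degreeLT, nsmul_eq_mul, Nat.cast_pow]
  rw [← Finset.sum_mul, h_card, mul_assoc]

theorem sum_coeffPair_eq_sum_smoothModel (n : ℕ) (v : Fin 2 → F) :
    ∑ x : CoeffPair F n, fiberExcess n ![1, 0] (x.1 : F[X]) x.2 * fiberExcess n v x.1 x.2 =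
      ∑ dm ∈ antidiagonal n,
        numMonicNonvanishing dm.1 v * (Fintype.card F : ℚ) ^ dm.1 *
          ∑ M : SmoothModel F dm.2, M.fiberExcess ![1, 0] * M.fiberExcess v := by
  simp only [← sum_normalizationData]
  rw [← Finset.sum_coe_sort (antidiagonal n), ← Fintype.sum_sigma']
  refine (Fintype.sum_of_injective NormalizationData.toCoeffPair
    NormalizationData.toCoeffPair_injective _ _ (fun x hx => ?_) fun x => ?_).symm
  · rw [fiberExcess_infty, excess_eq_zero_of_disc_eq_zero, zero_mul]
    by_contra h_disc
    exact hx (NormalizationData.mem_range_toCoeffPair x h_disc)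
  · rw [mem_antidiagonal.1 x.1.2]
    rfl

end Sieve

section Recursion

open Finset.HasAntidiagonal

variable {F : Type*} [Field F]

theorem numMonicNonvanishing_zero (v : Fin 2 → F) : numMonicNonvanishing 0 v = 1 :=
  Nat.card_eq_one_iff_exists.2
    ⟨⟨⟨1, monic_one, natDegree_one⟩, by simp [homEval_apply]⟩,
      fun h => Subtype.ext (Subtype.ext (h.1.2.1.natDegree_eq_zero.1 h.1.2.2))⟩

variable [Fintype F]

theorem numMonicNonvanishing_infty (d : ℕ) :
    numMonicNonvanishing d ![(1 : F), 0] = Fintype.card F ^ d := by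
  have h_one (h : MonicOfDegree F d) : homEval d ![(1 : F), 0] h.1 ≠ 0 := by
    have h_coeff := h.2.1.coeff_natDegree
    rw [h.2.2] at h_coeff
    simp [homEval_one_zero, h_coeff]
  rw [numMonicNonvanishing, Nat.card_congr (Equiv.subtypeUnivEquiv h_one),
    Nat.card_congr (monicEquivDegreeLT d), Nat.card_eq_fintype_card, card_degreeLT]

theorem numMonicNonvanishing_succ (d : ℕ) : (numMonicNonvanishing (d + 1) ![(0 : F), 1] : ℚ) =
    (Fintype.card F : ℚ) ^ d * ((Fintype.card F : ℚ) - 1) := by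
  classical
  have h_coeff (p : degreeLT F (d + 1)) :
      homEval (d + 1) ![(0 : F), 1] ((monicEquivDegreeLT (d + 1)).symm p).1 =
        (p : F[X]).coeff 0 := by
    rw [homEval_zero_one]
    simp [monicEquivDegreeLT]
  calc (numMonicNonvanishing (d + 1) ![(0 : F), 1] : ℚ)
      = ∑ p : degreeLT F (d + 1), if (p : F[X]).coeff 0 ≠ 0 then (1 : ℚ) else 0 := by
        rw [numMonicNonvanishing, ← Nat.card_congr ((monicEquivDegreeLT (d + 1)).symm.subtypeEquiv
          (p := fun p : degreeLT F (d + 1) => (p : F[X]).coeff 0 ≠ 0)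
          fun p => by rw [h_coeff]), Nat.card_eq_fintype_card, Fintype.card_subtype,
          Finset.sum_boole]
    _ = (Fintype.card F : ℚ) ^ d * ∑ a : F, if a ≠ 0 then (1 : ℚ) else 0 :=
        sum_degreeLT_coeff (Nat.zero_le d) fun a => if a ≠ 0 then (1 : ℚ) else 0
    _ = _ := by
        rw [Finset.sum_boole, Finset.filter_ne', Finset.card_erase_of_mem (Finset.mem_univ _),
          Finset.card_univ, Nat.cast_pred Fintype.card_pos]

/-- The correlation of the fibres over `∞` and over the point `v`, over all smooth curves of
weight `n`. -/
def smoothCorrelation (v : Fin 2 → F) (n : ℕ) : ℚ :=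
  ∑ M : SmoothModel F n, M.fiberExcess ![1, 0] * M.fiberExcess v

theorem sum_antidiagonal_pow_mul_succ (c : ℚ) (f : ℕ → ℚ) (n : ℕ) :
    ∑ dm ∈ antidiagonal (n + 1), c ^ dm.1 * f dm.2 =
      f (n + 1) + c * ∑ dm ∈ antidiagonal n, c ^ dm.1 * f dm.2 := by
  rw [Finset.Nat.sum_antidiagonal_succ, Finset.mul_sum]
  simp only [pow_zero, one_mul, pow_succ', mul_assoc]

theorem sum_pow_mul_smoothCorrelation_infty (n : ℕ) :
    ∑ dm ∈ antidiagonal n,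
      ((Fintype.card F : ℚ) ^ 2) ^ dm.1 * smoothCorrelation ![(1 : F), 0] dm.2 =
        (Fintype.card F : ℚ) ^ (3 * n) * ((Fintype.card F : ℚ) ^ 2 - Fintype.card F) := by
  rw [← sum_coeffPair_infty_sq]
  simp only [sq (fiberExcess _ _ _ _), sum_coeffPair_eq_sum_smoothModel, numMonicNonvanishing_infty,
    Nat.cast_pow, sq, mul_pow, smoothCorrelation]

theorem smoothCorrelation_infty (n : ℕ) : smoothCorrelation ![(1 : F), 0] (n + 1) =
    ((Fintype.card F : ℚ) ^ 2 - Fintype.card F) *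
      ((Fintype.card F : ℚ) ^ (3 * n + 3) - (Fintype.card F : ℚ) ^ (3 * n + 2)) := by
  have h := sum_pow_mul_smoothCorrelation_infty (F := F) (n + 1)
  rw [sum_antidiagonal_pow_mul_succ, sum_pow_mul_smoothCorrelation_infty] at h
  linear_combination h

theorem sum_numMonicNonvanishing_mul_succ (n : ℕ) (f : ℕ → ℚ) :
    ∑ dm ∈ antidiagonal (n + 1),
      numMonicNonvanishing dm.1 ![(0 : F), 1] * (Fintype.card F : ℚ) ^ dm.1 * f dm.2 =
        f (n + 1) + (Fintype.card F : ℚ) * ((Fintype.card F : ℚ) - 1) *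
          ∑ dm ∈ antidiagonal n,
            ((Fintype.card F : ℚ) ^ 2) ^ dm.1 * f dm.2 := by
  rw [Finset.Nat.sum_antidiagonal_succ, Finset.mul_sum]
  simp only [numMonicNonvanishing_zero, numMonicNonvanishing_succ, Nat.cast_one, pow_zero, one_mul]
  congr! 2
  ring

theorem smoothCorrelation_zero_succ (n : ℕ) : smoothCorrelation ![(0 : F), 1] (n + 1) =
    -((Fintype.card F : ℚ) * ((Fintype.card F : ℚ) - 1) *
      ∑ dm ∈ antidiagonal n,
        ((Fintype.card F : ℚ) ^ 2) ^ dm.1 * smoothCorrelation ![(0 : F), 1] dm.2) := by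
  rw [← add_eq_zero_iff_eq_neg, ← sum_numMonicNonvanishing_mul_succ,
    ← sum_coeffPair_infty_mul_zero (F := F) n.succ_ne_zero, sum_coeffPair_eq_sum_smoothModel]
  rfl

theorem smoothCorrelation_weight_zero (v : Fin 2 → F) :
    smoothCorrelation v 0 = (Fintype.card F : ℚ) ^ 2 - Fintype.card F := by
  have h_const (w : Fin 2 → F) (p : F[X]) : homEval 0 w p = homEval 0 ![1, 0] p := by
    simp [homEval_eq_sum]
  calc smoothCorrelation v 0 = smoothCorrelation ![(1 : F), 0] 0 := by
        simp only [smoothCorrelation, SmoothModel.fiberExcess, fiberExcess, mul_zero, h_const v]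
    _ = _ := by simpa using sum_pow_mul_smoothCorrelation_infty (F := F) 0

theorem sum_pow_mul_smoothCorrelation_zero (n : ℕ) :
    ∑ dm ∈ antidiagonal n,
      ((Fintype.card F : ℚ) ^ 2) ^ dm.1 * smoothCorrelation ![(0 : F), 1] dm.2 =
        (Fintype.card F : ℚ) ^ n * ((Fintype.card F : ℚ) ^ 2 - Fintype.card F) := by
  induction n with
  | zero => simp [smoothCorrelation_weight_zero]
  | succ n ih =>
    rw [sum_antidiagonal_pow_mul_succ, smoothCorrelation_zero_succ, ih]
    ring

theorem smoothCorrelation_zero (n : ℕ) : smoothCorrelation ![(0 : F), 1] (n + 1) =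
    -((Fintype.card F : ℚ) ^ (n + 1) * ((Fintype.card F : ℚ) - 1) *
      ((Fintype.card F : ℚ) ^ 2 - Fintype.card F)) := by
  rw [smoothCorrelation_zero_succ, sum_pow_mul_smoothCorrelation_zero]
  ring

end Recursion

section VariableChange

open Matrix

variable {F : Type*} [Field F] {n : ℕ}

theorem psiF_add (n : ℕ) (A : Matrix (Fin 2) (Fin 2) F) (p q : F[X]) :
    psiF n A (p + q) = psiF n A p + psiF n A q := by
  simp only [psiF_eq_homEval, map_add]

theorem psiF_C_mul (n : ℕ) (A : Matrix (Fin 2) (Fin 2) F) (c : F) (p : F[X]) :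
    psiF n A (C c * p) = C c * psiF n A p := by
  rw [psiF_eq_homEval, homEval_C_mul, psiF_eq_homEval]
  rfl

theorem QuadSubst.psiF {e : F} {r Q' P' Q P : F[X]} (s : QuadSubst (C e) r Q' P' Q P)
    (hr : r.natDegree ≤ n) (hQ' : Q'.natDegree ≤ n) (hP' : P'.natDegree ≤ 2 * n)
    (hQ : Q.natDegree ≤ n) (A : Matrix (Fin 2) (Fin 2) F) :
    QuadSubst (C e) (psiF n A r) (psiF n A Q') (psiF (2 * n) A P') (psiF n A Q)
      (psiF (2 * n) A P) := by
  have h := s.homEval (d := 0) (m := n) (natDegree_C e).le (hr.trans_eq (zero_add n).symm) hQ' hP'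
    (hQ.trans_eq (zero_add n).symm) (A.map C *ᵥ ![X, 1])
  rw [homEval_C, pow_zero, mul_one, zero_add] at h
  simp only [psiF_eq_homEval]
  exact h

/-- The changes of variables `(x, y) ↦ (A x, (e y + r(x)) / (c x + d)ⁿ)` between equations of
weight `n`, where `A` acts on `x` by a Möbius transformation with denominator `c x + d`. -/
@[ext]
structure VariableChange (F : Type*) [Field F] (n : ℕ) where
  A : GL (Fin 2) F
  e : Fˣ
  r : F[X]
  natDegree_r_le : r.natDegree ≤ n

namespace VariableChange

instance : One (VariableChange F n) := ⟨⟨1, 1, 0, natDegree_zero.trans_le n.zero_le⟩⟩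

/-- The product is the one for which pulling back equations is a left action; hence the matrices
are multiplied in the opposite order. -/
instance : Mul (VariableChange F n) where
  mul s t := ⟨t.A * s.A, s.e * t.e, C t.e.val * s.r + psiF n s.A t.r,
    natDegree_add_le_of_degree_le ((natDegree_C_mul_le _ _).trans s.natDegree_r_le)
      (natDegree_psiF_le n _ _)⟩

instance : Inv (VariableChange F n) where
  inv s := ⟨s.A⁻¹, s.e⁻¹, C (-s.e⁻¹.val) * psiF n s.A⁻¹.val s.r,
    (natDegree_C_mul_le _ _).trans (natDegree_psiF_le n _ _)⟩

theorem one_A : (1 : VariableChange F n).A = 1 := rfl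

theorem one_e : (1 : VariableChange F n).e = 1 := rfl

theorem one_r : (1 : VariableChange F n).r = 0 := rfl

theorem mul_A (s t : VariableChange F n) : (s * t).A = t.A * s.A := rfl

theorem mul_e (s t : VariableChange F n) : (s * t).e = s.e * t.e := rfl

theorem mul_r (s t : VariableChange F n) :
    (s * t).r = C t.e.val * s.r + psiF n s.A t.r := rfl

theorem inv_A (s : VariableChange F n) : s⁻¹.A = s.A⁻¹ := rfl

theorem inv_e (s : VariableChange F n) : s⁻¹.e = s.e⁻¹ := rfl

theorem inv_r (s : VariableChange F n) : s⁻¹.r = C (-s.e⁻¹.val) * psiF n s.A⁻¹.val s.r := rfl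

instance : Group (VariableChange F n) :=
  Group.ofLeftAxioms
    (fun s t u => by
      ext1
      · simp only [mul_A, mul_assoc]
      · simp only [mul_e, mul_assoc]
      · simp only [mul_r, mul_e, mul_A, psiF_add, psiF_C_mul, psiF_psiF, Units.val_mul, C_mul,
          mul_add, add_assoc, mul_left_comm, mul_assoc])
    (fun s => by
      ext1
      · rw [mul_A, one_A, mul_one]
      · rw [mul_e, one_e, one_mul]
      · rw [mul_r, one_r, one_A, Units.val_one, psiF_one s.natDegree_r_le, mul_zero, zero_add])
    (fun s => by
      ext1
      · rw [mul_A, inv_A, mul_inv_cancel, one_A]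
      · rw [mul_e, inv_e, inv_mul_cancel, one_e]
      · rw [mul_r, inv_r, inv_A, one_r, ← mul_assoc, ← C_mul, mul_neg, s.e.mul_inv, C_neg, C_1,
          neg_one_mul, neg_add_cancel])

/-- The linear coefficient of the pullback of the equation `y² + Q y = P`. -/
def linear (t : VariableChange F n) (Q : F[X]) : F[X] :=
  C t.e⁻¹.val * (2 * t.r + psiF n t.A Q)

/-- The constant term of the pullback of the equation `y² + Q y = P`. -/
def const (t : VariableChange F n) (Q P : F[X]) : F[X] :=
  C (t.e⁻¹.val ^ 2) * (psiF (2 * n) t.A P - t.r ^ 2 - psiF n t.A Q * t.r)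

theorem quadSubst (t : VariableChange F n) (Q P : F[X]) :
    QuadSubst (C t.e.val) t.r (t.linear Q) (t.const Q P) (psiF n t.A Q) (psiF (2 * n) t.A P) where
  linear := by rw [linear, ← mul_assoc, ← C_mul, t.e.mul_inv, C_1, one_mul]
  const := by rw [const, ← mul_assoc, ← C_pow, ← C_mul, ← mul_pow, t.e.mul_inv, one_pow, C_1,
    one_mul]

theorem natDegree_linear_le (t : VariableChange F n) (Q : F[X]) : (t.linear Q).natDegree ≤ n :=
  (natDegree_C_mul_le _ _).trans <| natDegree_add_le_of_degree_le
    (by simpa using natDegree_mul_le_of_le (natDegree_ofNat 2).le t.natDegree_r_le)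
    (natDegree_psiF_le n _ _)

theorem natDegree_const_le (t : VariableChange F n) (Q P : F[X]) :
    (t.const Q P).natDegree ≤ 2 * n := by
  have h_mul : (psiF n t.A Q * t.r).natDegree ≤ 2 * n :=
    (natDegree_mul_le_of_le (natDegree_psiF_le n _ _) t.natDegree_r_le).trans_eq (two_mul n).symm
  have h_sub : (psiF (2 * n) t.A P - t.r ^ 2).natDegree ≤ 2 * n :=
    (natDegree_sub_le_of_le (natDegree_psiF_le _ _ _)
      (natDegree_pow_le_of_le 2 t.natDegree_r_le)).trans_eq (max_self _)
  exact (natDegree_C_mul_le _ _).trans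
    ((natDegree_sub_le_of_le h_sub h_mul).trans_eq (max_self _))

theorem isSmooth (t : VariableChange F n) {Q P : F[X]} (hQ : Q.natDegree ≤ n)
    (hP : P.natDegree ≤ 2 * n) (h : IsSmooth n Q P) : IsSmooth n (t.linear Q) (t.const Q P) := by
  have h_inv : C t.e⁻¹.val * C t.e.val = 1 := by rw [← C_mul, t.e.inv_mul, C_1]
  have hr : (-(C t.e⁻¹.val * t.r)).natDegree ≤ n := by
    rw [natDegree_neg]
    exact (natDegree_C_mul_le _ _).trans t.natDegree_r_le
  have s := ((t.quadSubst Q P).symm h_inv).psiF hr (natDegree_psiF_le n _ _)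
    (natDegree_psiF_le _ _ _) (t.natDegree_linear_le Q) t.A⁻¹.val
  rw [psiF_psiF, psiF_psiF, Units.mul_inv, psiF_one hQ, psiF_one hP] at s
  exact h.of_quadSubst (A := t.A⁻¹) t.e⁻¹.ne_zero (natDegree_psiF_le n _ _) hQ hP s

instance : SMul (VariableChange F n) (SmoothModel F n) where
  smul t M := ⟨t.linear M.Q, t.const M.Q M.P, t.natDegree_linear_le M.Q,
    t.natDegree_const_le M.Q M.P, t.isSmooth M.natDegree_Q_le M.natDegree_P_le M.isSmooth⟩

theorem smul_eq_iff {t : VariableChange F n} {M N : SmoothModel F n} :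
    t • M = N ↔ QuadSubst (C t.e.val) t.r N.Q N.P (psiF n t.A M.Q) (psiF (2 * n) t.A M.P) := by
  have s : QuadSubst (C t.e.val) t.r (t • M).Q (t • M).P _ _ := t.quadSubst M.Q M.P
  refine ⟨fun h => h ▸ s, fun h => ?_⟩
  obtain ⟨hQ, hP⟩ := s.eq_of_isRegular (IsRegular.of_ne_zero (C_ne_zero.2 t.e.ne_zero)) h
  exact SmoothModel.ext hQ hP

instance : MulAction (VariableChange F n) (SmoothModel F n) where
  one_smul M := smul_eq_iff.2 <| by
    rw [one_A, one_e, one_r, Units.val_one, Units.val_one, C_1, psiF_one M.natDegree_Q_le,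
      psiF_one M.natDegree_P_le]
    exact .refl M.Q M.P
  mul_smul s t M := smul_eq_iff.2 <| by
    have h_t := (smul_eq_iff.1 (rfl : t • M = t • M)).psiF t.natDegree_r_le
      (t • M).natDegree_Q_le (t • M).natDegree_P_le (natDegree_psiF_le n _ _) s.A
    have h := (smul_eq_iff.1 (rfl : s • t • M = s • t • M)).trans h_t
    rwa [psiF_psiF, psiF_psiF, ← C_mul, mul_comm t.e.val, add_comm] at h

theorem fiberExcess_smul (t : VariableChange F n) (M : SmoothModel F n) (v : Fin 2 → F) :
    (t • M).fiberExcess v = M.fiberExcess (t.A.val *ᵥ v) :=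
  ((smul_eq_iff.1 rfl).homEval_psiF t.natDegree_r_le (t • M).natDegree_Q_le
    (t • M).natDegree_P_le v).excess_eq t.e.ne_zero

/-- A change of variables, as its three components. -/
def equivProd : VariableChange F n ≃ GL (Fin 2) F × Fˣ × degreeLT F (n + 1) where
  toFun t := (t.A, t.e, ⟨t.r, mem_degreeLT_succ_iff.2 t.natDegree_r_le⟩)
  invFun x := ⟨x.1, x.2.1, x.2.2, mem_degreeLT_succ_iff.1 x.2.2.2⟩
  left_inv _ := rfl
  right_inv _ := rfl

instance [Finite F] : Finite (VariableChange F n) :=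
  have := Fintype.ofFinite F
  Finite.of_equiv _ equivProd.symm

theorem card_eq [Fintype F] : (Nat.card (VariableChange F n) : ℚ) =
    ((Fintype.card F : ℚ) ^ 2 - 1) * ((Fintype.card F : ℚ) ^ 2 - Fintype.card F) *
      ((Fintype.card F : ℚ) - 1) * (Fintype.card F : ℚ) ^ (n + 1) := by
  have h_pos : 1 ≤ Fintype.card F := Fintype.card_pos
  have h_GL : (Nat.card (GL (Fin 2) F) : ℚ) =
      ((Fintype.card F : ℚ) ^ 2 - 1) * ((Fintype.card F : ℚ) ^ 2 - Fintype.card F) := by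
    rw [card_GL_field, Fin.prod_univ_two, Fin.val_zero, Fin.val_one, pow_zero, pow_one,
      Nat.cast_mul, Nat.cast_sub (Nat.one_le_pow _ _ h_pos),
      Nat.cast_sub (Nat.le_self_pow two_ne_zero _), Nat.cast_pow, Nat.cast_one]
  rw [Nat.card_congr equivProd, Nat.card_prod, Nat.card_prod, Nat.cast_mul, Nat.cast_mul, h_GL,
    Nat.card_units, Nat.card_eq_fintype_card, Nat.card_eq_fintype_card, card_degreeLT,
    Nat.cast_pred h_pos, Nat.cast_pow, mul_assoc, mul_assoc, mul_assoc]

end VariableChange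

end VariableChange

section ProjectiveLine

open Matrix

variable {F : Type*} [Field F]

/-- Representatives of the points of the projective line; `none` is the point at infinity. -/
def lineRep : Option F → Fin 2 → F
  | none => ![1, 0]
  | some t => ![t, 1]

theorem det_lineRep_ne_zero {a b : Option F} (hab : a ≠ b) :
    (Matrix.of ![lineRep a, lineRep b]).det ≠ 0 := by
  rcases a with _ | a <;> rcases b with _ | b
  · exact absurd rfl hab
  · simp [lineRep, det_fin_two]
  · simp [lineRep, det_fin_two]
  · have h_ne : a ≠ b := fun h => hab (congrArg some h)
    simpa [lineRep, det_fin_two, sub_eq_zero] using h_ne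

theorem exists_GL_mulVec_eq_lineRep {a b : Option F} (hab : a ≠ b) :
    ∃ A : GL (Fin 2) F, A.val *ᵥ ![1, 0] = lineRep a ∧ A.val *ᵥ ![0, 1] = lineRep b := by
  refine ⟨GeneralLinearGroup.mkOfDetNeZero (Matrix.of ![lineRep a, lineRep b])ᵀ
    ((det_transpose _).trans_ne (det_lineRep_ne_zero hab)), ?_, ?_⟩ <;>
  · ext i
    simp [GeneralLinearGroup.mkOfDetNeZero, mulVec, dotProduct, Fin.sum_univ_two]

variable [Fintype F]

theorem card_sub_one_ne_zero : (Fintype.card F : ℚ) - 1 ≠ 0 :=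
  sub_ne_zero.2 (Nat.cast_ne_one.2 Fintype.one_lt_card.ne')

theorem sum_eq_add_sum_units [DecidableEq F] (f : F → ℚ) : ∑ a, f a = f 0 + ∑ u : Fˣ, f u := by
  classical
  rw [Fintype.sum_eq_add_sum_subtype_ne f 0, ← unitsEquivNeZero.sum_comp]
  rfl

theorem sum_plane_eq (f : (Fin 2 → F) → ℚ) (h_scale : ∀ (u : Fˣ) v, f (u.val • v) = f v) :
    ∑ v, f v = f 0 + ((Fintype.card F : ℚ) - 1) * ∑ a, f (lineRep a) := by
  classical
  have h_infty (u : Fˣ) : f ![u, 0] = f ![1, 0] := by simpa using h_scale u ![1, 0]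
  have h_affine (u : Fˣ) : ∑ a, f ![a, u] = ∑ t, f ![t, 1] := by
    rw [← Equiv.sum_comp (Equiv.mulLeft₀ u.val u.ne_zero)]
    exact Finset.sum_congr rfl fun t _ => by simpa using h_scale u ![t, 1]
  have h_origin : (![0, 0] : Fin 2 → F) = 0 := by simp
  calc ∑ v, f v = ∑ b, ∑ a, f ![a, b] := by
        rw [← (finTwoArrowEquiv F).symm.sum_comp, Fintype.sum_prod_type_right]
        rfl
    _ = f 0 + ∑ u : Fˣ, f ![u, 0] + ∑ u : Fˣ, ∑ a, f ![a, u] := by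
        rw [sum_eq_add_sum_units, sum_eq_add_sum_units, h_origin]
    _ = f 0 + ((Fintype.card F : ℚ) - 1) * (f ![1, 0] + ∑ t, f ![t, 1]) := by
        simp only [h_infty, h_affine, Finset.sum_const, Finset.card_univ, Fintype.card_units,
          nsmul_eq_mul, Nat.cast_pred Fintype.card_pos]
        ring
    _ = _ := by
        rw [Fintype.sum_option]
        rfl

end ProjectiveLine

namespace SmoothModel

open Matrix

variable {F : Type*} [Field F] {n : ℕ}

theorem fiberExcess_unit_smul (M : SmoothModel F n) (u : Fˣ) (v : Fin 2 → F) :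
    M.fiberExcess (u.val • v) = M.fiberExcess v :=
  have s : QuadSubst (u.val ^ n) 0 (homEval n v M.Q) (homEval (2 * n) v M.P)
      (homEval n (u.val • v) M.Q) (homEval (2 * n) (u.val • v) M.P) :=
    ⟨by rw [homEval_smul]; ring, by rw [homEval_smul]; ring⟩
  (s.excess_eq (pow_ne_zero n u.ne_zero)).symm

variable [Fintype F]

/-- The number of rational points of the curve minus that of the projective line, which is minus
the trace of Frobenius. -/
def pointExcess (M : SmoothModel F n) : ℚ := ∑ a, M.fiberExcess (lineRep a)

theorem sum_fiberExcess (M : SmoothModel F n) : ∑ v, M.fiberExcess v =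
    M.fiberExcess 0 + ((Fintype.card F : ℚ) - 1) * M.pointExcess :=
  sum_plane_eq _ M.fiberExcess_unit_smul

theorem pointExcess_smul (t : VariableChange F n) (M : SmoothModel F n) :
    (t • M).pointExcess = M.pointExcess := by
  have h_bij : Function.Bijective t.A.val.mulVec :=
    Finite.injective_iff_bijective.1 (mulVec_injective_iff_isUnit.2 t.A.isUnit)
  have h : ∑ v, (t • M).fiberExcess v = ∑ v, M.fiberExcess v := by
    simp only [t.fiberExcess_smul]
    exact h_bij.sum_comp M.fiberExcess
  rw [sum_fiberExcess, sum_fiberExcess, t.fiberExcess_smul, mulVec_zero] at h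
  exact mul_left_cancel₀ card_sub_one_ne_zero (add_left_cancel h)

theorem sum_fiberExcess_mul_mulVec (A : GL (Fin 2) F) (v w : Fin 2 → F) :
    ∑ M : SmoothModel F n, M.fiberExcess (A.val *ᵥ v) * M.fiberExcess (A.val *ᵥ w) =
      ∑ M : SmoothModel F n, M.fiberExcess v * M.fiberExcess w := by
  let t : VariableChange F n := ⟨A, 1, 0, natDegree_zero.trans_le n.zero_le⟩
  calc _ = ∑ M : SmoothModel F n, (t • M).fiberExcess v * (t • M).fiberExcess w := by
        simp only [t.fiberExcess_smul, t]
    _ = _ := (MulAction.bijective t).sum_comp fun M : SmoothModel F n =>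
        M.fiberExcess v * M.fiberExcess w

theorem sum_fiberExcess_lineRep_sq (n : ℕ) (a : Option F) :
    ∑ M : SmoothModel F n, M.fiberExcess (lineRep a) * M.fiberExcess (lineRep a) =
      smoothCorrelation ![(1 : F), 0] n := by
  obtain ⟨b, hab⟩ := exists_ne a
  obtain ⟨A, hA, -⟩ := exists_GL_mulVec_eq_lineRep hab.symm
  rw [← hA, sum_fiberExcess_mul_mulVec]
  rfl

theorem sum_fiberExcess_lineRep_mul (n : ℕ) {a b : Option F} (hab : a ≠ b) :
    ∑ M : SmoothModel F n, M.fiberExcess (lineRep a) * M.fiberExcess (lineRep b) =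
      smoothCorrelation ![(0 : F), 1] n := by
  obtain ⟨A, hA, hA'⟩ := exists_GL_mulVec_eq_lineRep hab
  rw [← hA, ← hA', sum_fiberExcess_mul_mulVec]
  rfl

theorem sum_pointExcess_sq_eq_smoothCorrelation (n : ℕ) :
    ∑ M : SmoothModel F n, M.pointExcess ^ 2 = ((Fintype.card F : ℚ) + 1) *
      (smoothCorrelation ![(1 : F), 0] n +
        Fintype.card F * smoothCorrelation ![(0 : F), 1] n) := by
  classical
  have h_point (a : Option F) :
      ∑ b, ∑ M : SmoothModel F n, M.fiberExcess (lineRep a) * M.fiberExcess (lineRep b) =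
        smoothCorrelation ![(1 : F), 0] n +
          Fintype.card F * smoothCorrelation ![(0 : F), 1] n := by
    rw [← Finset.add_sum_erase _ _ (Finset.mem_univ a), sum_fiberExcess_lineRep_sq,
      Finset.sum_congr rfl fun b hb =>
        sum_fiberExcess_lineRep_mul n (Finset.ne_of_mem_erase hb).symm,
      Finset.sum_const, nsmul_eq_mul, Finset.card_erase_of_mem (Finset.mem_univ a),
      Finset.card_univ, Fintype.card_option, Nat.add_sub_cancel]
  calc ∑ M : SmoothModel F n, M.pointExcess ^ 2
      = ∑ a, ∑ b, ∑ M : SmoothModel F n,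
          M.fiberExcess (lineRep a) * M.fiberExcess (lineRep b) := by
        simp only [pointExcess, sq, Finset.sum_mul_sum]
        rw [Finset.sum_comm]
        exact Finset.sum_congr rfl fun a _ => Finset.sum_comm
    _ = _ := by
        simp only [h_point, Finset.sum_const, Finset.card_univ, Fintype.card_option,
          nsmul_eq_mul, Nat.cast_add_one]

theorem sum_pointExcess_sq (g : ℕ) : ∑ M : SmoothModel F (g + 1), M.pointExcess ^ 2 =
    Nat.card (VariableChange F (g + 1)) *
      (((Fintype.card F : ℚ) ^ (2 * g) - 1) / ((Fintype.card F : ℚ) - 1)) := by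
  rw [sum_pointExcess_sq_eq_smoothCorrelation, smoothCorrelation_infty, smoothCorrelation_zero,
    VariableChange.card_eq]
  field_simp [card_sub_one_ne_zero]
  ring

theorem pointExcess_eq_nPoints {g : ℕ} (M : SmoothModel F (g + 1)) :
    M.pointExcess = (nPoints g F M.Q M.P : ℚ) - ((Fintype.card F : ℚ) + 1) := by
  have h_affine (t : F) : M.fiberExcess ![t, 1] =
      (Nat.card {y : F // y ^ 2 + aeval t M.Q * y = aeval t M.P} : ℚ) - 1 := by
    rw [fiberExcess, _root_.fiberExcess, homEval_of_eq_one M.natDegree_Q_le rfl,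
      homEval_of_eq_one M.natDegree_P_le rfl]
    rfl
  have h_fibers : Nat.card {xy : F × F // xy.2 ^ 2 + aeval xy.1 M.Q * xy.2 = aeval xy.1 M.P} =
      ∑ t : F, Nat.card {y : F // y ^ 2 + aeval t M.Q * y = aeval t M.P} := by
    rw [← Nat.card_sigma]
    exact Nat.card_congr (Equiv.subtypeProdEquivSigmaSubtype
      fun t y : F => y ^ 2 + aeval t M.Q * y = aeval t M.P)
  rw [pointExcess, Fintype.sum_option, lineRep, fiberExcess, fiberExcess_infty, excess]
  simp only [lineRep, h_affine, nPoints, h_fibers, Finset.sum_sub_distrib, Finset.sum_const,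
    Finset.card_univ, nsmul_eq_mul, mul_one, Nat.cast_add, Nat.cast_sum,
    Algebra.algebraMap_self, RingHom.id_apply, mul_add]
  ring

end SmoothModel

section OrbitSum

open MulAction

variable {G X : Type*} [Group G] [MulAction G X] [Fintype X]

theorem sum_card_orbit_mul [Fintype (orbitRel.Quotient G X)] {f : X → ℚ}
    (hf : ∀ (t : G) x, f (t • x) = f x) :
    ∑ c : orbitRel.Quotient G X, (Nat.card (orbit G c.out) : ℚ) * f c.out = ∑ x, f x := by
  classical
  have h_orbit (c : orbitRel.Quotient G X) (y : orbit G c.out) : f y = f c.out := by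
    obtain ⟨t, ht⟩ := y.2
    rw [← ht]
    exact hf t _
  calc ∑ c : orbitRel.Quotient G X, (Nat.card (orbit G c.out) : ℚ) * f c.out
      = ∑ y : Σ c : orbitRel.Quotient G X, orbit G c.out, f y.2 := by
        simp only [Fintype.sum_sigma, h_orbit, Finset.sum_const, Finset.card_univ, nsmul_eq_mul,
          Nat.card_eq_fintype_card]
    _ = ∑ x, f x := (selfEquivSigmaOrbits G X).symm.sum_comp f

theorem div_card_stabilizer_eq {X : Type*} [MulAction G X] [Finite X] (a : ℚ) (x : X) :
    a / Nat.card (stabilizer G x) = Nat.card (orbit G x) * a / Nat.card G := by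
  have h_orbit : (Nat.card (orbit G x) : ℚ) ≠ 0 :=
    have : Nonempty (orbit G x) := (nonempty_orbit x).to_subtype
    Nat.cast_ne_zero.2 Nat.card_pos.ne'
  rw [← Nat.card_congr (orbitProdStabilizerEquivGroup G x), Nat.card_prod, Nat.cast_mul,
    mul_div_mul_left _ _ h_orbit]

theorem finsum_quot_div_card_stabilizer {r : X → X → Prop} (hr : ∀ x y, r x y ↔ x ∈ orbit G y)
    {f : X → ℚ} (hf : ∀ (t : G) x, f (t • x) = f x) :
    ∑ᶠ c : Quot r, f c.out / Nat.card (stabilizer G c.out) = (∑ x, f x) / Nat.card G := by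
  have := Fintype.ofFinite (orbitRel.Quotient G X)
  have h_quotient : ∑ᶠ c : orbitRel.Quotient G X, f c.out / Nat.card (stabilizer G c.out) =
      (∑ x, f x) / Nat.card G := by
    simp only [finsum_eq_sum_of_fintype, div_card_stabilizer_eq, ← Finset.sum_div,
      sum_card_orbit_mul hf]
  obtain rfl : r = (orbitRel G X).r := funext₂ fun x y => propext (hr x y)
  exact h_quotient

end OrbitSum

section Classes

open MulAction

variable {F : Type*} [Field F] {g : ℕ}

/-- Standard hyperelliptic equations of genus `g` are the smooth models of weight `g + 1`. -/
def hypEqEquiv : HypEq F g ≃ SmoothModel F (g + 1) where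
  toFun C := ⟨C.1.1, C.1.2, (isHypModel_iff.1 C.2).1, (isHypModel_iff.1 C.2).2.1,
    (isHypModel_iff.1 C.2).2.2⟩
  invFun M := ⟨(M.Q, M.P), isHypModel_iff.2 ⟨M.natDegree_Q_le, M.natDegree_P_le, M.isSmooth⟩⟩
  left_inv _ := rfl
  right_inv _ := rfl

instance : MulAction (VariableChange F (g + 1)) (HypEq F g) := hypEqEquiv.mulAction _

theorem hypEqEquiv_smul (t : VariableChange F (g + 1)) (C : HypEq F g) :
    hypEqEquiv (t • C) = t • hypEqEquiv C := rfl

theorem isoTriple_iff_smul_eq {t : VariableChange F (g + 1)} {C₁ C₂ : HypEq F g} :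
    IsoTriple g t.A.val t.e t.r C₁.1.1 C₁.1.2 C₂.1.1 C₂.1.2 ↔ t • C₂ = C₁ := by
  rw [← hypEqEquiv.apply_eq_iff_eq, hypEqEquiv_smul, VariableChange.smul_eq_iff]
  refine ⟨fun h => ⟨h.2.2.1, ?_⟩, fun s => ⟨t.e.ne_zero, t.natDegree_r_le, s.linear, ?_⟩⟩
  · rw [← C_pow]
    exact h.2.2.2
  · rw [C_pow]
    exact s.const

theorem isomRel_iff_mem_orbit {C₁ C₂ : HypEq F g} :
    IsomRel g C₁ C₂ ↔ C₁ ∈ orbit (VariableChange F (g + 1)) C₂ :=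
  ⟨fun ⟨A, e, r, h⟩ => ⟨⟨A, .mk0 e h.1, r, h.2.1⟩, isoTriple_iff_smul_eq.1 h⟩,
    fun ⟨t, ht⟩ => ⟨t.A, t.e, t.r, isoTriple_iff_smul_eq.2 ht⟩⟩

/-- Automorphism triples are the stabilizing changes of variables. -/
def autTriplesEquiv (C : HypEq F g) :
    AutTriples g C ≃ stabilizer (VariableChange F (g + 1)) C where
  toFun x := ⟨⟨x.1.1, .mk0 x.1.2.1 x.2.1, x.1.2.2, x.2.2.1⟩, isoTriple_iff_smul_eq.1 x.2⟩
  invFun t := ⟨(t.1.A, t.1.e, t.1.r), isoTriple_iff_smul_eq.2 t.2⟩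
  left_inv _ := rfl
  right_inv _ := Subtype.ext (VariableChange.ext rfl (Units.ext rfl) rfl)

variable [Fintype F]

instance : Fintype (HypEq F g) := Fintype.ofEquiv _ hypEqEquiv.symm

theorem pointExcess_hypEqEquiv (C : HypEq F g) : (hypEqEquiv C).pointExcess =
    -(((Fintype.card F : ℚ) + 1) - (nPoints g F C.1.1 C.1.2 : ℚ)) := by
  rw [SmoothModel.pointExcess_eq_nPoints, neg_sub]
  rfl

theorem sum_pointExcess_hypEqEquiv_sq :
    ∑ C : HypEq F g, (hypEqEquiv C).pointExcess ^ 2 = Nat.card (VariableChange F (g + 1)) *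
      (((Fintype.card F : ℚ) ^ (2 * g) - 1) / ((Fintype.card F : ℚ) - 1)) := by
  rw [hypEqEquiv.sum_comp fun M => M.pointExcess ^ 2, SmoothModel.sum_pointExcess_sq]

end Classes

theorem stmt_17_general (F : Type*) [Field F] [Fintype F] (g : ℕ) :
    ∑ᶠ c : HypClass F g,
      ((Fintype.card F : ℚ) - 1) / (Nat.card (AutTriples g (Quot.out c)) : ℚ) *
        (((Fintype.card F : ℚ) + 1) -
          (nPoints g F (Quot.out c).1.1 (Quot.out c).1.2 : ℚ)) ^ 2 =
      (Fintype.card F : ℚ) ^ (2 * g) - 1 := by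
  have h_invariant (t : VariableChange F (g + 1)) (C : HypEq F g) :
      (hypEqEquiv (t • C)).pointExcess ^ 2 = (hypEqEquiv C).pointExcess ^ 2 := by
    rw [hypEqEquiv_smul, SmoothModel.pointExcess_smul]
  have h_orbits : ∑ᶠ c : HypClass F g,
      (hypEqEquiv (Quot.out c)).pointExcess ^ 2 / Nat.card (AutTriples g (Quot.out c)) =
        ((Fintype.card F : ℚ) ^ (2 * g) - 1) / ((Fintype.card F : ℚ) - 1) := by
    simp only [Nat.card_congr (autTriplesEquiv _)]
    refine (finsum_quot_div_card_stabilizer (fun _ _ => isomRel_iff_mem_orbit)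
      (f := fun C : HypEq F g => (hypEqEquiv C).pointExcess ^ 2) h_invariant).trans ?_
    rw [sum_pointExcess_hypEqEquiv_sq,
      mul_div_cancel_left₀ _ (Nat.cast_ne_zero.2 Nat.card_pos.ne')]
  calc _ = ((Fintype.card F : ℚ) - 1) * ∑ᶠ c : HypClass F g,
      (hypEqEquiv (Quot.out c)).pointExcess ^ 2 / Nat.card (AutTriples g (Quot.out c)) := by
        rw [mul_finsum]
        exact finsum_congr fun c => by rw [pointExcess_hypEqEquiv, neg_sq, mul_comm_div]
    _ = _ := by rw [h_orbits, mul_div_cancel₀ _ card_sub_one_ne_zero]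

/-- Bergström's formula, verified for q = 2, g = 5 in the paper: for any
finite field F = F_q and any g ≥ 2, the weighted sum over the F_q-isomorphism classes of
hyperelliptic curves of genus g of a₁(C)²/|Aut_{F_q}(C)|, where
a₁(C) = q + 1 − |C(F_q)| is the trace of Frobenius, equals q^{2g} − 1; in particular for
q = 2 and g = 5 it equals 1023. -/
theorem stmt_17 (F : Type) [Field F] [Fintype F] (g : ℕ) (hg : 2 ≤ g) :
    ∑ᶠ c : HypClass F g,
      ((Fintype.card F : ℚ) - 1) / (Nat.card (AutTriples g (Quot.out c)) : ℚ) *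
        (((Fintype.card F : ℚ) + 1) -
          (nPoints g F (Quot.out c).1.1 (Quot.out c).1.2 : ℚ)) ^ 2 =
      (Fintype.card F : ℚ) ^ (2 * g) - 1 :=
  stmt_17_general F g

end
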